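/- arXiv:1604.02278 — 7 statements merged into one kernel-verified Lean document; each statement's English description precedes it below -/
import Mathlib

section
/- For every real B > 0 consider the two-level instance with T = 2 periods, demands d = (0, B+1), supplier fixed ordering costs f^S = (0, 1), supplier unit ordering and holding costs p^S = h^S = (0, 0), retailer fixed ordering and holding costs f^R = h^R = (0, 0), retailer unit ordering costs p^R = (0, 1), and retailer inventory bounds u^R = (B, B). Then: (a) the minimum cost over all feasible two-level plans equals 1; (b) the minimum cost over all feasible two-level plans that additionally satisfy the zero-inventory-ordering property at the retailer level, i.e. s^R_{t-1}·x^R_t = 0 for t = 1, 2, equals B + 1. In particular the ratio between the best retailer-ZIO cost and the optimal cost is B + 1, which is unbounded as B → ∞. -/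
/-- A two-level plan: nonnegative supplier order/inventory `xS, sS` and retailer
order/inventory `xR, sR` with `sR 0 = sS 0 = 0`, satisfying the flow balance
`sR (t-1) + xR t = d t + sR t` and `sS (t-1) + xS t = xR t + sS t` for `t ∈ {1,…,T}`. -/
def TwoLevelPlan (T : ℕ) (d xR sR xS sS : ℕ → ℝ) : Prop :=
  sR 0 = 0 ∧ sS 0 = 0 ∧
  (∀ t ∈ Finset.Icc 1 T, 0 ≤ xR t ∧ 0 ≤ sR t ∧ 0 ≤ xS t ∧ 0 ≤ sS t) ∧
  (∀ t ∈ Finset.Icc 1 T, sR (t - 1) + xR t = d t + sR t) ∧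
  (∀ t ∈ Finset.Icc 1 T, sS (t - 1) + xS t = xR t + sS t)

/-- Cost of a two-level plan. -/
noncomputable def TwoLevelCost (T : ℕ) (fS pS hS fR pR hR : ℕ → ℝ)
    (xR sR xS sS : ℕ → ℝ) : ℝ :=
  ∑ t ∈ Finset.Icc 1 T,
    ((if 0 < xS t then fS t else 0) + pS t * xS t + hS t * sS t +
     (if 0 < xR t then fR t else 0) + pR t * xR t + hR t * sR t)

/-!
In this instance a plan costs `xR 2`, plus `1` if the supplier orders in period `2`. The late
retailer order `xR 2` covers all demand not carried over from period `1`. The inventory bound lets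
at most `B` of the `B + 1` units be carried, so `1 ≤ xR 2`. Under zero-inventory ordering, period
`2` is served entirely from stock or entirely by a new order; the former would need more than `B`
units of stock, so `B + 1 ≤ xR 2`. Both bounds are attained with the supplier ordering everything
in period `1`.
-/

namespace TwoLevelPlan

section Feasibility

variable {T t : ℕ} {d xR sR xS sS : ℕ → ℝ}

theorem demand_sub_inventory_le_order (h : TwoLevelPlan T d xR sR xS sS)
    (ht : t ∈ Finset.Icc 1 T) : d t - sR (t - 1) ≤ xR t := by
  obtain ⟨-, -, hnonneg, hbalance, -⟩ := h
  linarith [(hnonneg t ht).2.1, hbalance t ht]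

theorem demand_le_order_of_zio (h : TwoLevelPlan T d xR sR xS sS) (ht : t ∈ Finset.Icc 1 T)
    (hstock : sR (t - 1) < d t) (hzio : sR (t - 1) * xR t = 0) : d t ≤ xR t := by
  have hlow := h.demand_sub_inventory_le_order ht
  have hpos : 0 < xR t := (sub_pos.2 hstock).trans_le hlow
  have hempty : sR (t - 1) = 0 := (mul_eq_zero.1 hzio).resolve_right hpos.ne'
  simpa only [hempty, sub_zero] using hlow

/-- The retailer inventory that flow balance forces on the orders `x` under the demands `d`. It is
negative where the orders fall short of the demands. -/
def retailerInventory (d x : ℕ → ℝ) (t : ℕ) : ℝ :=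
  ∑ i ∈ Finset.Icc 1 t, (x i - d i)

/-- The supplier orders of the plan that buys the total of the retailer orders `x` over `T` periods
in period `1`. -/
def upfrontOrder (T : ℕ) (x : ℕ → ℝ) (t : ℕ) : ℝ :=
  if t = 1 then ∑ i ∈ Finset.Icc 1 T, x i else 0

/-- The supplier inventory resulting from `upfrontOrder`: after period `t` the supplier holds
exactly the later retailer orders. Period `0` is special because nothing has been bought yet. -/
def upfrontInventory (T : ℕ) (x : ℕ → ℝ) (t : ℕ) : ℝ :=
  if t = 0 then 0 else ∑ i ∈ Finset.Ioc t T, x i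

theorem retailerInventory_balance (d x : ℕ → ℝ) (ht : 1 ≤ t) :
    retailerInventory d x (t - 1) + x t = d t + retailerInventory d x t := by
  obtain ⟨k, rfl⟩ := Nat.exists_eq_add_of_le' ht
  simp only [retailerInventory, Nat.add_sub_cancel, Finset.sum_Icc_succ_top ht]
  ring

theorem upfrontInventory_balance (x : ℕ → ℝ) (ht : t ∈ Finset.Icc 1 T) :
    upfrontInventory T x (t - 1) + upfrontOrder T x t = x t + upfrontInventory T x t := by
  obtain ⟨ht1, htT⟩ := Finset.mem_Icc.1 ht
  have hsplit : x t + ∑ i ∈ Finset.Ioc t T, x i = ∑ i ∈ Finset.Icc t T, x i :=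
    Finset.add_sum_Ioc_eq_sum_Icc htT
  obtain rfl | hlate := ht1.eq_or_lt
  · simpa [upfrontInventory, upfrontOrder] using hsplit.symm
  · have hIcc : Finset.Ioc (t - 1) T = Finset.Icc t T := by grind
    simp [upfrontInventory, upfrontOrder, hIcc, hsplit, hlate.ne', (Nat.sub_pos_of_lt hlate).ne',
      (zero_lt_one.trans hlate).ne']

theorem of_retailerOrders {x : ℕ → ℝ} (hx : ∀ t ∈ Finset.Icc 1 T, 0 ≤ x t)
    (hs : ∀ t ∈ Finset.Icc 1 T, 0 ≤ retailerInventory d x t) :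
    TwoLevelPlan T d x (retailerInventory d x) (upfrontOrder T x) (upfrontInventory T x) := by
  have hOrder (t : ℕ) : 0 ≤ upfrontOrder T x t := by
    unfold upfrontOrder
    split_ifs
    exacts [Finset.sum_nonneg hx, le_rfl]
  have hInventory (t : ℕ) : 0 ≤ upfrontInventory T x t := by
    unfold upfrontInventory
    split_ifs
    · exact le_rfl
    · exact Finset.sum_nonneg fun i hi => hx i (by grind)
  exact ⟨by simp [retailerInventory], by simp [upfrontInventory],
    fun t ht => ⟨hx t ht, hs t ht, hOrder t, hInventory t⟩,
    fun t ht => retailerInventory_balance d x (Finset.mem_Icc.1 ht).1,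
    fun t ht => upfrontInventory_balance x ht⟩

end Feasibility

section SinglePeriodCost

variable {T n : ℕ} {K p : ℝ}

theorem cost_singlePeriod (hn : n ∈ Finset.Icc 1 T) (xR sR xS sS : ℕ → ℝ) :
    TwoLevelCost T (fun t => if t = n then K else 0) (fun _ => 0) (fun _ => 0)
      (fun _ => 0) (fun t => if t = n then p else 0) (fun _ => 0) xR sR xS sS =
      (if 0 < xS n then K else 0) + p * xR n := by
  rw [TwoLevelCost, Finset.sum_eq_single_of_mem n hn]
  · simp
  · intro t _ htn
    simp [htn]

theorem mul_order_le_cost_singlePeriod (hK : 0 ≤ K) (hn : n ∈ Finset.Icc 1 T)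
    (xR sR xS sS : ℕ → ℝ) :
    p * xR n ≤ TwoLevelCost T (fun t => if t = n then K else 0) (fun _ => 0) (fun _ => 0)
      (fun _ => 0) (fun t => if t = n then p else 0) (fun _ => 0) xR sR xS sS := by
  rw [cost_singlePeriod hn]
  exact le_add_of_nonneg_left (ite_nonneg hK le_rfl)

theorem cost_singlePeriod_upfront (hn : n ∈ Finset.Icc 1 T) (hn1 : n ≠ 1) (x sR sS : ℕ → ℝ) :
    TwoLevelCost T (fun t => if t = n then K else 0) (fun _ => 0) (fun _ => 0)
      (fun _ => 0) (fun t => if t = n then p else 0) (fun _ => 0) x sR (upfrontOrder T x) sS =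
      p * x n := by
  simp [cost_singlePeriod hn, upfrontOrder, hn1]

end SinglePeriodCost

section TwoPeriods

/-- The retailer orders that cover a demand `D` in period `2` by ordering `q` units in period `1`
and the remaining `D - q` in period `2`. Its values in other periods are irrelevant. -/
def splitOrder (D q : ℝ) (t : ℕ) : ℝ :=
  if t = 1 then q else D - q

theorem retailerInventory_splitOrder (D q : ℝ) {t : ℕ} (ht : t ∈ Finset.Icc 1 2) :
    retailerInventory (fun t => if t = 2 then D else 0) (splitOrder D q) t =
      if t = 1 then q else 0 := by
  obtain rfl | rfl : t = 1 ∨ t = 2 := by grind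
  all_goals simp [retailerInventory, splitOrder, Finset.sum_Icc_succ_top]

theorem of_splitOrder {D q : ℝ} (hq : 0 ≤ q) (hqD : q ≤ D) :
    TwoLevelPlan 2 (fun t => if t = 2 then D else 0) (splitOrder D q)
      (retailerInventory (fun t => if t = 2 then D else 0) (splitOrder D q))
      (upfrontOrder 2 (splitOrder D q)) (upfrontInventory 2 (splitOrder D q)) := by
  refine of_retailerOrders (fun t _ => ite_nonneg hq (sub_nonneg.2 hqD)) fun t ht => ?_
  rw [retailerInventory_splitOrder D q ht]
  exact ite_nonneg hq le_rfl

theorem retailerInventory_splitOrder_le {D q u : ℝ} (hu : 0 ≤ u) (hqu : q ≤ u) :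
    ∀ t ∈ Finset.Icc 1 2,
      retailerInventory (fun t => if t = 2 then D else 0) (splitOrder D q) t ≤ u := by
  intro t ht
  rw [retailerInventory_splitOrder D q ht]
  split_ifs <;> assumption

theorem splitOrder_zero_zio (D : ℝ) :
    ∀ t ∈ Finset.Icc 1 2,
      retailerInventory (fun t => if t = 2 then D else 0) (splitOrder D 0) (t - 1) *
        splitOrder D 0 t = 0 := by
  intro t ht
  obtain rfl | rfl : t = 1 ∨ t = 2 := by grind
  · simp [splitOrder]
  · simp [retailerInventory_splitOrder]

end TwoPeriods

end TwoLevelPlan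

/-- For the instance with `T = 2`, `d = (0, B+1)`, `f^S = (0,1)`, `p^S = h^S = (0,0)`,
`f^R = h^R = (0,0)`, `p^R = (0,1)` and retailer inventory bounds `u^R = (B,B)`:
(a) the minimum cost over all feasible two-level plans equals `1`;
(b) the minimum cost over all feasible two-level plans satisfying the retailer-level
zero-inventory-ordering property `sR (t-1) * xR t = 0` equals `B + 1`. -/
theorem stmt2 (B : ℝ) (hB : 0 < B) :
    IsLeast {c : ℝ | ∃ xR sR xS sS : ℕ → ℝ,
        TwoLevelPlan 2 (fun t => if t = 2 then B + 1 else 0) xR sR xS sS ∧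
        (∀ t ∈ Finset.Icc 1 2, sR t ≤ B) ∧
        c = TwoLevelCost 2 (fun t => if t = 2 then 1 else 0) (fun _ => 0) (fun _ => 0)
              (fun _ => 0) (fun t => if t = 2 then 1 else 0) (fun _ => 0) xR sR xS sS} 1 ∧
    IsLeast {c : ℝ | ∃ xR sR xS sS : ℕ → ℝ,
        TwoLevelPlan 2 (fun t => if t = 2 then B + 1 else 0) xR sR xS sS ∧
        (∀ t ∈ Finset.Icc 1 2, sR t ≤ B) ∧
        (∀ t ∈ Finset.Icc 1 2, sR (t - 1) * xR t = 0) ∧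
        c = TwoLevelCost 2 (fun t => if t = 2 then 1 else 0) (fun _ => 0) (fun _ => 0)
              (fun _ => 0) (fun t => if t = 2 then 1 else 0) (fun _ => 0) xR sR xS sS}
      (B + 1) := by
  have one_mem : 1 ∈ Finset.Icc 1 2 := by simp
  have two_mem : 2 ∈ Finset.Icc 1 2 := by simp
  refine ⟨⟨?_, ?_⟩, ?_, ?_⟩
  · refine ⟨_, _, _, _, TwoLevelPlan.of_splitOrder hB.le (le_add_of_nonneg_right zero_le_one),
      TwoLevelPlan.retailerInventory_splitOrder_le hB.le le_rfl, ?_⟩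
    rw [TwoLevelPlan.cost_singlePeriod_upfront two_mem (by simp)]
    simp [TwoLevelPlan.splitOrder]
  · rintro _ ⟨xR, sR, xS, sS, hplan, hbound, rfl⟩
    have hcarry : B + 1 - sR 1 ≤ xR 2 := hplan.demand_sub_inventory_le_order two_mem
    have hcost := TwoLevelPlan.mul_order_le_cost_singlePeriod (p := 1) zero_le_one two_mem
      xR sR xS sS
    linarith [hbound 1 one_mem]
  · refine ⟨_, _, _, _, TwoLevelPlan.of_splitOrder le_rfl (by positivity),
      TwoLevelPlan.retailerInventory_splitOrder_le hB.le hB.le,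
      TwoLevelPlan.splitOrder_zero_zio _, ?_⟩
    rw [TwoLevelPlan.cost_singlePeriod_upfront two_mem (by simp)]
    simp [TwoLevelPlan.splitOrder]
  · rintro _ ⟨xR, sR, xS, sS, hplan, hbound, hzio, rfl⟩
    have hstock : sR 1 < B + 1 := (hbound 1 one_mem).trans_lt (lt_add_one B)
    have horder : B + 1 ≤ xR 2 := hplan.demand_le_order_of_zio two_mem hstock (hzio 2 two_mem)
    have hcost := TwoLevelPlan.mul_order_le_cost_singlePeriod (p := 1) zero_le_one two_mem
      xR sR xS sS
    linarith
end

section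
/- Let x_t, s_t (t = 1,…,T) be nonnegative reals with s_0 = 0 satisfying s_{t-1} + x_t = d_t + s_t and s_t ≤ u_t for all t, where d_t, u_t ≥ 0 and where u_{t-1} ≤ u_t + d_t for all t ∈ {2,…,T}. Let 1 ≤ i ≤ j ≤ T be such that s_{i-1} ∈ {0, u_{i-1}} (with u_0 := 0), s_j = u_j, and 0 < s_t < u_t for all i ≤ t ≤ j−1 (i.e., [i,j] is a block with leaving inventory equal to the bound u_j). Assume that at most one period t ∈ {i,…,j} has x_t > 0. If some period t ∈ {i,…,j} has x_t > 0, then x_j > 0; that is, the unique ordering period of the block is its last period j. -/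
section LotSizing

variable {α : Type*} [AddCommMonoid α] [PartialOrder α] [IsOrderedCancelAddMonoid α]
  {d u x s : ℕ → α}

theorem order_pos_of_inventory_eq_bound {t : ℕ} (hnorm : u (t - 1) ≤ u t + d t)
    (hflow : s (t - 1) + x t = d t + s t) (hprev : s (t - 1) < u (t - 1)) (hfull : s t = u t) :
    0 < x t := by
  have hlt : s (t - 1) < s (t - 1) + x t :=
    calc
      s (t - 1) < u (t - 1) := hprev
      _ ≤ u t + d t := hnorm
      _ = d t + s t := by rw [hfull, add_comm]
      _ = s (t - 1) + x t := hflow.symm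
  exact pos_of_lt_add_right hlt

theorem stmt5_general {i j : ℕ}
    (hnorm : ∀ t ∈ Finset.Ioc i j, u (t - 1) ≤ u t + d t)
    (hflow : ∀ t ∈ Finset.Ioc i j, s (t - 1) + x t = d t + s t)
    (hblk : ∀ t ∈ Finset.Ico i j, s t < u t)
    (hout : s j = u j)
    (hex : ∃ t ∈ Finset.Icc i j, 0 < x t) :
    0 < x j := by
  obtain ⟨t, ht, hxt⟩ := hex
  obtain ⟨hit, htj⟩ := Finset.mem_Icc.mp ht
  rcases htj.eq_or_lt with rfl | htj
  · exact hxt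
  · have hj : j ∈ Finset.Ioc i j := Finset.right_mem_Ioc.mpr (hit.trans_lt htj)
    have hpred : j - 1 ∈ Finset.Ico i j := Finset.mem_Ico.mpr (by omega)
    exact order_pos_of_inventory_eq_bound (hnorm j hj) (hflow j hj) (hblk (j - 1) hpred) hout

end LotSizing

/-- In a feasible single-level plan with normalized inventory bounds
(`u (t-1) ≤ u t + d t` for `t ∈ {2,…,T}`), consider a block `[i,j]` with leaving
inventory equal to the bound, `s j = u j` (entering inventory `s (i-1) ∈ {0, u (i-1)}`
with `u 0 = 0`, and `0 < s t < u t` for `i ≤ t ≤ j-1`), containing at most one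
ordering period. If the block contains an ordering period, then it is the last
period `j` of the block. -/
theorem stmt5 (T : ℕ) (hT : 1 ≤ T) (d u x s : ℕ → ℝ)
    (hd : ∀ t ∈ Finset.Icc 1 T, 0 ≤ d t) (hu : ∀ t ∈ Finset.Icc 1 T, 0 ≤ u t)
    (hu0 : u 0 = 0)
    (hnorm : ∀ t ∈ Finset.Icc 2 T, u (t - 1) ≤ u t + d t)
    (hx : ∀ t ∈ Finset.Icc 1 T, 0 ≤ x t) (hs : ∀ t ∈ Finset.Icc 1 T, 0 ≤ s t)
    (hs0 : s 0 = 0)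
    (hflow : ∀ t ∈ Finset.Icc 1 T, s (t - 1) + x t = d t + s t)
    (hbound : ∀ t ∈ Finset.Icc 1 T, s t ≤ u t)
    (i j : ℕ) (hi : 1 ≤ i) (hij : i ≤ j) (hjT : j ≤ T)
    (hin : s (i - 1) = 0 ∨ s (i - 1) = u (i - 1))
    (hout : s j = u j)
    (hblk : ∀ t : ℕ, i ≤ t → t ≤ j - 1 → 0 < s t ∧ s t < u t)
    (huniq : ∀ t₁ ∈ Finset.Icc i j, ∀ t₂ ∈ Finset.Icc i j,
      0 < x t₁ → 0 < x t₂ → t₁ = t₂)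
    (hex : ∃ t ∈ Finset.Icc i j, 0 < x t) :
    0 < x j := by
  exact stmt5_general (fun t ht => hnorm t (by grind)) (fun t ht => hflow t (by grind))
    (fun t ht => (hblk t (by grind) (by grind)).2) hout hex
end

section
/- Let 2 ≤ i ≤ k ≤ j ≤ T, let d_t ≥ 0, f_t, p_t, h_t ≥ 0, u_t ≥ 0 (t = 1,…,T), and let β ≥ 0. Suppose the unique single-order plan on {i,…,j} determined by s_{i-1} = u_{i-1}, s_j = β, x_t = 0 for t ∈ {i,…,j} \ {k} and flow balance s_{t-1} + x_t = d_t + s_t has x_k = d_{ij} + β − u_{i-1} > 0, satisfies 0 < s_t < u_t for all i ≤ t ≤ j−1, and has cost c = f_k + p_k x_k + Σ_{n=i}^{j} h_n s_n. If d_{i-1,k-1} < u_{i-2} < u_{i-1} + d_{i-1}, then the single-order plan on {i−1,…,j} determined by s_{i-2} = u_{i-2}, s_j = β, x_t = 0 for t ∈ {i−1,…,j} \ {k} also satisfies 0 < s_t < u_t for all i−1 ≤ t ≤ j−1, has x_k = d_{i-1,j} + β − u_{i-2} > 0, and its cost f_k + p_k x_k + Σ_{n=i-1}^{j} h_n s_n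 equals c + h_{i-1}(u_{i-2} − d_{i-1}) + (p_k − Σ_{n=i}^{k-1} h_n)·(u_{i-1} − u_{i-2} + d_{i-1}). In particular, the cost of the extended block [i−1,j] with entering inventory u_{i-2} can be computed from that of the block [i,j] with entering inventory u_{i-1} in constant time, independently of j. -/
/-!
Summing the flow balance over consecutive periods determines a single-order plan: before the order
the inventory is the entering inventory minus the demand met so far, from the order on it is the
leaving inventory plus the demand still to come. Let a period with demand `δ` be prepended to a
block, and let the entering inventory change from `α` to `α'`. The inventories from the order on
stay the same, all earlier ones drop by `α - α' + δ`, and the order grows by this amount, which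
gives the cost formula. As the drop is positive, the upper bounds are inherited; the lower bounds
before the order hold because `α'` exceeds the demand of all periods up to it.
-/

open Finset

/-- The plan of a block on the periods `a + 1, …, j` with entering inventory `α`, leaving inventory
`β` and single ordering period `k`. The block `[a + 1, j]` of the paper is indexed by the last
period `a` before it, so that its entering inventory is `s a`. -/
structure IsSingleOrderPlan {G : Type*} [AddCommMonoid G] (d : ℕ → G) (a k j : ℕ) (α β : G)
    (x s : ℕ → G) : Prop where
  entering : s a = α
  leaving : s j = β
  order_eq_zero : ∀ t ∈ Icc (a + 1) j, t ≠ k → x t = 0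
  flow : ∀ t ∈ Icc (a + 1) j, s (t - 1) + x t = d t + s t

/-- The ordering and holding cost of a single-order plan on the periods `a + 1, …, j`. The fixed
cost `f k` is always charged, so this is the cost of the block only if `x k > 0`. -/
def singleOrderCost {R : Type*} [Semiring R] (f p h : ℕ → R) (a k j : ℕ) (x s : ℕ → R) : R :=
  f k + p k * x k + ∑ n ∈ Icc (a + 1) j, h n * s n

theorem sum_Icc_eq_add_sum_Icc_add_one {M : Type*} [AddCommMonoid M] (g : ℕ → M) {m n : ℕ}
    (hmn : m ≤ n) : ∑ t ∈ Icc m n, g t = g m + ∑ t ∈ Icc (m + 1) n, g t := by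
  rw [Icc_add_one_left_eq_Ioc, add_sum_Ioc_eq_sum_Icc hmn]

namespace IsSingleOrderPlan

section Balance

variable {G : Type*} [AddCommMonoid G] {d x s x' s' : ℕ → G} {a k j m n t : ℕ} {α α' β : G}

theorem inventory_add_sum_order (hP : IsSingleOrderPlan d a k j α β x s)
    (ham : a ≤ m) (hmn : m ≤ n) (hnj : n ≤ j) :
    s m + ∑ t ∈ Icc (m + 1) n, x t = ∑ t ∈ Icc (m + 1) n, d t + s n := by
  induction n, hmn using Nat.le_induction with
  | base => simp
  | succ n hmn ih =>
    have hflow : s n + x (n + 1) = d (n + 1) + s (n + 1) :=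
      hP.flow (n + 1) (mem_Icc.2 ⟨by omega, hnj⟩)
    rw [sum_Icc_succ_top (by omega), sum_Icc_succ_top (by omega), ← add_assoc, ih (by omega),
      add_assoc, hflow, add_assoc]

theorem inventory_eq_of_order_le (hP : IsSingleOrderPlan d a k j α β x s)
    (hat : a ≤ t) (hkt : k ≤ t) (htj : t ≤ j) :
    s t = ∑ n ∈ Icc (t + 1) j, d n + β := by
  have hx : ∑ n ∈ Icc (t + 1) j, x n = 0 := by
    refine sum_eq_zero fun n hn ↦ ?_
    rw [mem_Icc] at hn
    exact hP.order_eq_zero n (mem_Icc.2 ⟨by omega, hn.2⟩) (by omega)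
  have hbal := hP.inventory_add_sum_order hat htj le_rfl
  rwa [hx, add_zero, hP.leaving] at hbal

theorem inventory_extend_of_order_le (hP : IsSingleOrderPlan d (a + 1) k j α β x s)
    (hP' : IsSingleOrderPlan d a k j α' β x' s') (hat : a + 1 ≤ t) (hkt : k ≤ t) (htj : t ≤ j) :
    s' t = s t := by
  rw [hP.inventory_eq_of_order_le hat hkt htj, hP'.inventory_eq_of_order_le (by omega) hkt htj]

end Balance

section Inventory

variable {G : Type*} [AddCommGroup G] {d x s x' s' : ℕ → G} {a k j t : ℕ} {α α' β : G}

theorem inventory_eq_of_lt_order (hP : IsSingleOrderPlan d a k j α β x s)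
    (hat : a ≤ t) (htk : t < k) (htj : t ≤ j) :
    s t = α - ∑ n ∈ Icc (a + 1) t, d n := by
  have hx : ∑ n ∈ Icc (a + 1) t, x n = 0 := by
    refine sum_eq_zero fun n hn ↦ ?_
    rw [mem_Icc] at hn
    exact hP.order_eq_zero n (mem_Icc.2 ⟨hn.1, by omega⟩) (by omega)
  have hbal := hP.inventory_add_sum_order le_rfl hat htj
  rw [hx, add_zero, hP.entering] at hbal
  exact eq_sub_of_add_eq' hbal.symm

theorem order_eq (hP : IsSingleOrderPlan d a k j α β x s) (hak : a < k) (hkj : k ≤ j) :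
    x k = ∑ t ∈ Icc (a + 1) j, d t + β - α := by
  have hx : ∑ t ∈ Icc (a + 1) j, x t = x k :=
    sum_eq_single_of_mem k (mem_Icc.2 ⟨hak, hkj⟩) hP.order_eq_zero
  have hbal := hP.inventory_add_sum_order le_rfl (hak.le.trans hkj) le_rfl
  rw [hx, hP.entering, hP.leaving] at hbal
  exact eq_sub_of_add_eq' hbal

theorem inventory_extend_of_lt_order (hP : IsSingleOrderPlan d (a + 1) k j α β x s)
    (hP' : IsSingleOrderPlan d a k j α' β x' s') (hat : a + 1 ≤ t) (htk : t < k) (htj : t ≤ j) :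
    s' t = s t - (α - α' + d (a + 1)) := by
  rw [hP.inventory_eq_of_lt_order hat htk htj,
    hP'.inventory_eq_of_lt_order (by omega) htk htj, sum_Icc_eq_add_sum_Icc_add_one d hat]
  abel

theorem order_extend (hP : IsSingleOrderPlan d (a + 1) k j α β x s)
    (hP' : IsSingleOrderPlan d a k j α' β x' s') (hak : a + 1 < k) (hkj : k ≤ j) :
    x' k = x k + (α - α' + d (a + 1)) := by
  rw [hP.order_eq hak hkj, hP'.order_eq (by omega) hkj,
    sum_Icc_eq_add_sum_Icc_add_one d (by omega)]
  abel

end Inventory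

section Bounds

variable {G : Type*} [AddCommGroup G] [PartialOrder G] [IsOrderedAddMonoid G]
  {d u x s x' s' : ℕ → G} {a k j t : ℕ} {α α' β : G}

theorem inventory_pos_of_lt_order (hP : IsSingleOrderPlan d a k j α β x s)
    (hd : ∀ t ∈ Icc (a + 2) (k - 1), 0 ≤ d t) (hα : ∑ t ∈ Icc (a + 1) (k - 1), d t < α)
    (hat : a + 1 ≤ t) (htk : t < k) (htj : t ≤ j) : 0 < s t := by
  have hdem : ∑ n ∈ Icc (a + 1) t, d n ≤ ∑ n ∈ Icc (a + 1) (k - 1), d n := by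
    refine sum_le_sum_of_subset_of_nonneg (Icc_subset_Icc_right (by omega)) fun n hn hnt ↦ hd n ?_
    rw [mem_Icc] at hn hnt ⊢
    omega
  rw [hP.inventory_eq_of_lt_order (by omega) htk htj]
  exact sub_pos.2 (hdem.trans_lt hα)

theorem inventory_bounds_extend (hP : IsSingleOrderPlan d (a + 1) k j α β x s)
    (hP' : IsSingleOrderPlan d a k j α' β x' s') (hak : a + 1 < k)
    (hd : ∀ t ∈ Icc (a + 2) (k - 1), 0 ≤ d t)
    (hs : ∀ t ∈ Icc (a + 2) (j - 1), 0 < s t ∧ s t < u t) (hα : α ≤ u (a + 1))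
    (hlow : ∑ t ∈ Icc (a + 1) (k - 1), d t < α') (hshift : 0 < α - α' + d (a + 1)) :
    ∀ t ∈ Icc (a + 1) (j - 1), 0 < s' t ∧ s' t < u t := by
  intro t ht
  obtain ⟨hat, htj⟩ := mem_Icc.1 ht
  obtain htk | hkt := lt_or_ge t k
  · have hsu : s t ≤ u t := by
      obtain rfl | hat' := hat.eq_or_lt
      · exact hP.entering.trans_le hα
      · exact (hs t (mem_Icc.2 ⟨hat', htj⟩)).2.le
    refine ⟨hP'.inventory_pos_of_lt_order hd hlow hat htk (by omega), ?_⟩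
    rw [hP.inventory_extend_of_lt_order hP' hat htk (by omega)]
    exact (sub_lt_self _ hshift).trans_le hsu
  · rw [hP.inventory_extend_of_order_le hP' hat hkt (by omega)]
    exact hs t (mem_Icc.2 ⟨by omega, htj⟩)

end Bounds

section Cost

variable {R : Type*} [Ring R] {d x s x' s' : ℕ → R} {a k j : ℕ} {α α' β : R}

theorem sum_holding_extend (hP : IsSingleOrderPlan d (a + 1) k j α β x s)
    (hP' : IsSingleOrderPlan d a k j α' β x' s') (hkj : k ≤ j) (h : ℕ → R) :
    ∑ n ∈ Icc (a + 2) j, h n * s' n = ∑ n ∈ Icc (a + 2) j, h n * s n -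
      (∑ n ∈ Icc (a + 2) (k - 1), h n) * (α - α' + d (a + 1)) := by
  rw [eq_sub_iff_add_eq', ← eq_sub_iff_add_eq, ← sum_sub_distrib, sum_mul]
  refine sum_subset_zero_on_sdiff (Icc_subset_Icc_right (by omega)) (fun n hn ↦ ?_) fun n hn ↦ ?_
  · rw [mem_sdiff, mem_Icc, mem_Icc] at hn
    rw [hP.inventory_extend_of_order_le hP' (by omega) (by omega) hn.1.2, sub_self]
  · rw [mem_Icc] at hn
    rw [hP.inventory_extend_of_lt_order hP' (by omega) (by omega) (by omega), ← mul_sub,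
      sub_sub_cancel]

theorem singleOrderCost_extend (hP : IsSingleOrderPlan d (a + 1) k j α β x s)
    (hP' : IsSingleOrderPlan d a k j α' β x' s') (hak : a + 1 < k) (hkj : k ≤ j)
    (f p h : ℕ → R) :
    singleOrderCost f p h a k j x' s' =
      singleOrderCost f p h (a + 1) k j x s + h (a + 1) * (α' - d (a + 1)) +
        (p k - ∑ n ∈ Icc (a + 2) (k - 1), h n) * (α - α' + d (a + 1)) := by
  have hs' : s' (a + 1) = α' - d (a + 1) := by
    rw [hP'.inventory_eq_of_lt_order (by omega) hak (by omega), Icc_self, sum_singleton]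
  rw [singleOrderCost, singleOrderCost, sum_Icc_eq_add_sum_Icc_add_one _ (by omega), hs',
    hP.order_extend hP' hak hkj, hP.sum_holding_extend hP' hkj, mul_add (p k), sub_mul (p k)]
  abel

end Cost

end IsSingleOrderPlan

theorem stmt8_general {R : Type*} [Ring R] [PartialOrder R] [IsOrderedAddMonoid R]
    {d u x s x' s' : ℕ → R} {a k j : ℕ} {α α' β : R} (f p h : ℕ → R)
    (hak : a + 1 < k) (hkj : k ≤ j) (hd : ∀ t ∈ Icc (a + 2) (k - 1), 0 ≤ d t)
    (hP : IsSingleOrderPlan d (a + 1) k j α β x s) (hP' : IsSingleOrderPlan d a k j α' β x' s')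
    (hx : 0 < x k) (hs : ∀ t ∈ Icc (a + 2) (j - 1), 0 < s t ∧ s t < u t) (hα : α ≤ u (a + 1))
    (hlow : ∑ t ∈ Icc (a + 1) (k - 1), d t < α') (hhigh : α' < α + d (a + 1)) :
    (∀ t ∈ Icc (a + 1) (j - 1), 0 < s' t ∧ s' t < u t) ∧
      x' k = ∑ t ∈ Icc (a + 1) j, d t + β - α' ∧
      0 < x' k ∧
      singleOrderCost f p h a k j x' s' =
        singleOrderCost f p h (a + 1) k j x s + h (a + 1) * (α' - d (a + 1)) +
          (p k - ∑ n ∈ Icc (a + 2) (k - 1), h n) * (α - α' + d (a + 1)) := by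
  have hshift : 0 < α - α' + d (a + 1) := by
    rw [sub_add_eq_add_sub]
    exact sub_pos.2 hhigh
  refine ⟨hP.inventory_bounds_extend hP' hak hd hs hα hlow hshift, hP'.order_eq (by omega) hkj, ?_,
    hP.singleOrderCost_extend hP' hak hkj f p h⟩
  rw [hP.order_extend hP' hak hkj]
  exact add_pos hx hshift

/-- Extending a block one period to the left: if the single-order plan on `{i,…,j}`
with entering inventory `u (i-1)`, leaving inventory `β` and ordering period `k` has
`x k = d_{ij} + β − u (i-1) > 0`, keeps inventories strictly between `0` and the
bounds, and costs `c = f k + p k x k + Σ_{n=i}^{j} h n s n`, and if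
`d_{i-1,k-1} < u (i-2) < u (i-1) + d (i-1)`, then the single-order plan on
`{i-1,…,j}` with entering inventory `u (i-2)`, leaving inventory `β` and ordering
period `k` also keeps inventories strictly between the bounds, orders
`x' k = d_{i-1,j} + β − u (i-2) > 0`, and costs
`c + h (i-1) (u (i-2) − d (i-1)) + (p k − Σ_{n=i}^{k-1} h n) (u (i-1) − u (i-2) + d (i-1))`. -/
theorem stmt8 (T : ℕ) (d f p h u : ℕ → ℝ)
    (hd : ∀ t ∈ Finset.Icc 1 T, 0 ≤ d t) (hf : ∀ t ∈ Finset.Icc 1 T, 0 ≤ f t)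
    (hp : ∀ t ∈ Finset.Icc 1 T, 0 ≤ p t) (hh : ∀ t ∈ Finset.Icc 1 T, 0 ≤ h t)
    (hu : ∀ t ∈ Finset.Icc 1 T, 0 ≤ u t)
    (i k j : ℕ) (hi : 2 ≤ i) (hik : i ≤ k) (hkj : k ≤ j) (hjT : j ≤ T)
    (β : ℝ) (hβ : 0 ≤ β)
    (x s : ℕ → ℝ)
    (hin : s (i - 1) = u (i - 1)) (hout : s j = β)
    (hx0 : ∀ t ∈ Finset.Icc i j, t ≠ k → x t = 0)
    (hflow : ∀ t ∈ Finset.Icc i j, s (t - 1) + x t = d t + s t)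
    (hxk : x k = (∑ t ∈ Finset.Icc i j, d t) + β - u (i - 1))
    (hxkpos : 0 < x k)
    (hblk : ∀ t ∈ Finset.Icc i (j - 1), 0 < s t ∧ s t < u t)
    (c : ℝ)
    (hc : c = f k + p k * x k + ∑ n ∈ Finset.Icc i j, h n * s n)
    (hlow : (∑ t ∈ Finset.Icc (i - 1) (k - 1), d t) < u (i - 2))
    (hhigh : u (i - 2) < u (i - 1) + d (i - 1)) :
    ∀ x' s' : ℕ → ℝ,
      s' (i - 2) = u (i - 2) → s' j = β →
      (∀ t ∈ Finset.Icc (i - 1) j, t ≠ k → x' t = 0) →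
      (∀ t ∈ Finset.Icc (i - 1) j, s' (t - 1) + x' t = d t + s' t) →
      (∀ t ∈ Finset.Icc (i - 1) (j - 1), 0 < s' t ∧ s' t < u t) ∧
      x' k = (∑ t ∈ Finset.Icc (i - 1) j, d t) + β - u (i - 2) ∧
      0 < x' k ∧
      f k + p k * x' k + ∑ n ∈ Finset.Icc (i - 1) j, h n * s' n =
        c + h (i - 1) * (u (i - 2) - d (i - 1)) +
          (p k - ∑ n ∈ Finset.Icc i (k - 1), h n) * (u (i - 1) - u (i - 2) + d (i - 1)) := by
  intro x' s' hin' hout' hx0' hflow'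
  obtain ⟨a, rfl⟩ := Nat.exists_eq_add_of_le' hi
  have hd' : ∀ t ∈ Finset.Icc (a + 2) (k - 1), 0 ≤ d t := fun t ht ↦
    hd t (Finset.Icc_subset_Icc (by omega) (by omega) ht)
  exact hc ▸ stmt8_general f p h hik hkj hd' ⟨hin, hout, hx0, hflow⟩ ⟨hin', hout', hx0', hflow'⟩
    hxkpos hblk le_rfl hlow hhigh
end

section
/- Let n ≥ 1 and let S, a_1,…,a_n be positive integers. Build the following two-level instance with T = 2n + 1 periods and supplier inventory bounds: demands d_t = 0 for t ≤ 2n and d_T = S; supplier fixed ordering costs f^S_t = 1 for odd t ≤ 2n and f^S_t = 2S for even t ≤ 2n and for t = T; retailer fixed ordering costs f^R_t = 2S for odd t ≤ 2n and for t = T, and f^R_t = 0 for even t ≤ 2n; all holding costs h^S_t = h^R_t = 0; retailer unit ordering costs p^R_t = 0; supplier unit ordering costs p^S_t = 1 − 1/a_{⌈t/2⌉} for t ≤ 2n and p^S_T = 0; supplier inventory bounds u^S_t = a_{⌈t/2⌉} for t ≤ 2n and u^S_T = 0 (no retailer inventory bound). Then there exists a feasible two-level plan of this instance with total cost at most S if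 and only if there exists a subset A ⊆ {1,…,n} with Σ_{i∈A} a_i = S. -/
/-!
A setup at cost `2S` is unaffordable, so in a plan of cost at most `S` the supplier orders only in
the periods `2i - 1` and the retailer only in the periods `2i`. An order `x` placed in period
`2i - 1` therefore goes through the stock of that period, which gives `x ≤ a i`, and a positive one
costs `1 + (1 - 1 / a i) x = x + (1 - x / a i) ≥ x`, with equality iff `x = a i`. The orders add up
to at least `S` and cost at most `S`, so each of them is either `0` or the full `a i`.
-/

open Finset

theorem stock_zero_add_sum_inflow {M : Type*} [AddCommMonoid M] {T : ℕ} {s x y : ℕ → M}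
    (h : ∀ t ∈ Icc 1 T, s (t - 1) + x t = y t + s t) :
    s 0 + ∑ t ∈ Icc 1 T, x t = ∑ t ∈ Icc 1 T, y t + s T := by
  induction T with
  | zero => simp
  | succ T ih =>
    have ih := ih fun t ht => h t (Icc_subset_Icc_right T.le_succ ht)
    have hlast : s T + x (T + 1) = y (T + 1) + s (T + 1) := h (T + 1) (by simp)
    rw [sum_Icc_succ_top (by lia), sum_Icc_succ_top (by lia), ← add_assoc, ih, add_assoc, hlast,
      add_assoc]

theorem sum_Icc_eq_sum_odd {M : Type*} [AddCommMonoid M] {n : ℕ} {f : ℕ → M}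
    (hf : ∀ t ∈ Icc 1 (2 * n + 1), ¬(t ≤ 2 * n ∧ t % 2 = 1) → f t = 0) :
    ∑ t ∈ Icc 1 (2 * n + 1), f t = ∑ i ∈ Icc 1 n, f (2 * i - 1) := by
  refine (sum_of_injOn (fun i => 2 * i - 1) ?_ ?_ ?_ fun _ _ => rfl).symm
  · intro i hi j hj hij
    simp only [coe_Icc, Set.mem_Icc] at hi hj hij
    lia
  · intro i hi
    simp only [coe_Icc, Set.mem_Icc] at hi ⊢
    lia
  · refine fun t ht hodd => hf t ht fun ⟨hle, hmod⟩ => hodd ⟨(t + 1) / 2, ?_, ?_⟩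
    · simp only [coe_Icc, Set.mem_Icc]
      lia
    · lia

theorem exists_subset_sum_eq_sum {ι M : Type*} [AddCommMonoid M] {s : Finset ι} {a z : ι → M}
    (h : ∀ i ∈ s, z i = 0 ∨ z i = a i) : ∃ A ⊆ s, ∑ i ∈ A, a i = ∑ i ∈ s, z i := by
  classical
  refine ⟨{i ∈ s | z i ≠ 0}, filter_subset _ _, ?_⟩
  rw [← sum_filter_ne_zero s]
  exact sum_congr rfl fun i hi => ((h i (mem_filter.1 hi).1).resolve_left (mem_filter.1 hi).2).symm

/-- The cost of ordering the quantity `x` at fixed cost `f` and unit cost `p`, that is, the ordering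
cost of one level in one period. -/
noncomputable def orderCost (f p x : ℝ) : ℝ :=
  (if 0 < x then f else 0) + p * x

section OrderCost

variable {f p x a : ℝ}

@[simp]
theorem orderCost_zero_right : orderCost f p 0 = 0 := by
  simp [orderCost]

theorem orderCost_of_pos (hx : 0 < x) : orderCost f p x = f + p * x := by
  rw [orderCost, if_pos hx]

theorem orderCost_nonneg (hf : 0 ≤ f) (hp : 0 ≤ p) (hx : 0 ≤ x) : 0 ≤ orderCost f p x :=
  add_nonneg (by split_ifs <;> simp [hf]) (mul_nonneg hp hx)

theorem fixedCost_le_orderCost (hp : 0 ≤ p) (hx : 0 < x) : f ≤ orderCost f p x := by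
  rw [orderCost_of_pos hx]
  exact le_add_of_nonneg_right (mul_nonneg hp hx.le)

theorem orderCost_one_of_pos (hx : 0 < x) : orderCost 1 (1 - 1 / a) x = x + (1 - x / a) := by
  rw [orderCost_of_pos hx]
  ring

theorem le_orderCost_one (ha : 0 < a) (hx : 0 ≤ x) (hxa : x ≤ a) :
    x ≤ orderCost 1 (1 - 1 / a) x := by
  rcases hx.eq_or_lt with rfl | hpos
  · simp
  · rw [orderCost_one_of_pos hpos]
    linarith [(div_le_one ha).2 hxa]

theorem orderCost_one_eq_self_iff (ha : 0 < a) (hx : 0 ≤ x) :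
    orderCost 1 (1 - 1 / a) x = x ↔ x = 0 ∨ x = a := by
  rcases hx.eq_or_lt with rfl | hpos
  · simp
  · rw [orderCost_one_of_pos hpos, add_eq_left, sub_eq_zero, eq_comm, div_eq_one_iff_eq ha.ne',
      or_iff_right hpos.ne']

end OrderCost

theorem exists_order_iff_exists_subset_sum {ι : Type*} {s : Finset ι} {a : ι → ℝ}
    (ha : ∀ i ∈ s, 0 < a i) (S : ℝ) :
    (∃ z : ι → ℝ, (∀ i ∈ s, 0 ≤ z i ∧ z i ≤ a i) ∧ S ≤ ∑ i ∈ s, z i ∧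
      ∑ i ∈ s, orderCost 1 (1 - 1 / a i) (z i) ≤ S) ↔
    ∃ A ⊆ s, ∑ i ∈ A, a i = S := by
  classical
  constructor
  · rintro ⟨z, hz, hsum, hcost⟩
    have hle : ∀ i ∈ s, z i ≤ orderCost 1 (1 - 1 / a i) (z i) := fun i hi =>
      le_orderCost_one (ha i hi) (hz i hi).1 (hz i hi).2
    have heq : ∀ i ∈ s, z i = orderCost 1 (1 - 1 / a i) (z i) :=
      (sum_eq_sum_iff_of_le hle).1 ((sum_le_sum hle).antisymm (hcost.trans hsum))
    have hall : ∀ i ∈ s, z i = 0 ∨ z i = a i := fun i hi =>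
      (orderCost_one_eq_self_iff (ha i hi) (hz i hi).1).1 (heq i hi).symm
    obtain ⟨A, hA, hAz⟩ := exists_subset_sum_eq_sum hall
    exact ⟨A, hA, hAz.trans (((sum_le_sum hle).trans hcost).antisymm hsum)⟩
  · rintro ⟨A, hA, rfl⟩
    have hz : ∀ i ∈ s, 0 ≤ (if i ∈ A then a i else 0) ∧ (if i ∈ A then a i else 0) ≤ a i := by
      intro i hi
      split_ifs <;> simp [(ha i hi).le]
    have hsum : ∑ i ∈ s, (if i ∈ A then a i else 0) = ∑ i ∈ A, a i := by
      rw [sum_ite_mem, inter_eq_right.2 hA]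
    refine ⟨fun i => if i ∈ A then a i else 0, hz, hsum.ge, ?_⟩
    rw [← hsum]
    exact (sum_congr rfl fun i hi => (orderCost_one_eq_self_iff (ha i hi) (hz i hi).1).2
      (ite_eq_or_eq _ _ _).symm).le

theorem twoLevelCost_eq_sum_orderCost (T : ℕ) (fS pS hS fR pR hR xR sR xS sS : ℕ → ℝ) :
    TwoLevelCost T fS pS hS fR pR hR xR sR xS sS =
      ∑ t ∈ Icc 1 T, orderCost (fS t) (pS t) (xS t) +
      ∑ t ∈ Icc 1 T, orderCost (fR t) (pR t) (xR t) +
      ∑ t ∈ Icc 1 T, (hS t * sS t + hR t * sR t) := by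
  rw [TwoLevelCost, ← sum_add_distrib, ← sum_add_distrib]
  refine sum_congr rfl fun t _ => ?_
  simp only [orderCost]
  ring

/-- Nonnegativity of all six cost parameters over the horizon `1, …, T`, the standing assumption of
two-level lot-sizing. -/
def NonnegCosts (T : ℕ) (fS pS hS fR pR hR : ℕ → ℝ) : Prop :=
  ∀ t ∈ Icc 1 T, 0 ≤ fS t ∧ 0 ≤ pS t ∧ 0 ≤ hS t ∧ 0 ≤ fR t ∧ 0 ≤ pR t ∧ 0 ≤ hR t

namespace TwoLevelPlan

variable {T t : ℕ} {d xR sR xS sS fS pS hS fR pR hR : ℕ → ℝ}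

theorem stock_nonneg (h : TwoLevelPlan T d xR sR xS sS) (ht : t ≤ T) : 0 ≤ sR t ∧ 0 ≤ sS t := by
  obtain ⟨hR0, hS0, hnonneg, -, -⟩ := h
  rcases t.eq_zero_or_pos with rfl | hpos
  · exact ⟨hR0.ge, hS0.ge⟩
  · obtain ⟨-, hsR, -, hsS⟩ := hnonneg t (mem_Icc.2 ⟨hpos, ht⟩)
    exact ⟨hsR, hsS⟩

theorem sum_demand_le_sum_supplier_order (h : TwoLevelPlan T d xR sR xS sS) :
    ∑ t ∈ Icc 1 T, d t ≤ ∑ t ∈ Icc 1 T, xS t := by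
  obtain ⟨hsR, hsS⟩ := h.stock_nonneg le_rfl
  obtain ⟨hR0, hS0, -, hflowR, hflowS⟩ := h
  linarith [stock_zero_add_sum_inflow hflowR, stock_zero_add_sum_inflow hflowS]

theorem supplier_order_le_stock_of_retailer_order_eq_zero (h : TwoLevelPlan T d xR sR xS sS)
    (ht : t ∈ Icc 1 T) (hxR : xR t = 0) : xS t ≤ sS t := by
  have hprev : 0 ≤ sS (t - 1) := (h.stock_nonneg ((t.sub_le 1).trans (mem_Icc.1 ht).2)).2
  obtain ⟨-, -, -, -, hflowS⟩ := h
  linarith [hflowS t ht]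

theorem supplier_orderCost_nonneg (h : TwoLevelPlan T d xR sR xS sS)
    (hc : NonnegCosts T fS pS hS fR pR hR) (ht : t ∈ Icc 1 T) :
    0 ≤ orderCost (fS t) (pS t) (xS t) :=
  orderCost_nonneg (hc t ht).1 (hc t ht).2.1 (h.2.2.1 t ht).2.2.1

theorem retailer_orderCost_nonneg (h : TwoLevelPlan T d xR sR xS sS)
    (hc : NonnegCosts T fS pS hS fR pR hR) (ht : t ∈ Icc 1 T) :
    0 ≤ orderCost (fR t) (pR t) (xR t) :=
  orderCost_nonneg (hc t ht).2.2.2.1 (hc t ht).2.2.2.2.1 (h.2.2.1 t ht).1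

theorem sum_orderCost_le_cost (h : TwoLevelPlan T d xR sR xS sS)
    (hc : NonnegCosts T fS pS hS fR pR hR) :
    ∑ t ∈ Icc 1 T, orderCost (fS t) (pS t) (xS t) +
      ∑ t ∈ Icc 1 T, orderCost (fR t) (pR t) (xR t) ≤
      TwoLevelCost T fS pS hS fR pR hR xR sR xS sS := by
  rw [twoLevelCost_eq_sum_orderCost]
  refine le_add_of_nonneg_right (sum_nonneg fun t ht => ?_)
  obtain ⟨hsR, hsS⟩ := h.stock_nonneg (mem_Icc.1 ht).2
  obtain ⟨-, -, hhS, -, -, hhR⟩ := hc t ht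
  positivity

theorem sum_supplier_orderCost_le_cost (h : TwoLevelPlan T d xR sR xS sS)
    (hc : NonnegCosts T fS pS hS fR pR hR) :
    ∑ t ∈ Icc 1 T, orderCost (fS t) (pS t) (xS t) ≤
      TwoLevelCost T fS pS hS fR pR hR xR sR xS sS :=
  (le_add_of_nonneg_right (sum_nonneg fun _ => h.retailer_orderCost_nonneg hc)).trans
    (h.sum_orderCost_le_cost hc)

theorem sum_retailer_orderCost_le_cost (h : TwoLevelPlan T d xR sR xS sS)
    (hc : NonnegCosts T fS pS hS fR pR hR) :
    ∑ t ∈ Icc 1 T, orderCost (fR t) (pR t) (xR t) ≤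
      TwoLevelCost T fS pS hS fR pR hR xR sR xS sS :=
  (le_add_of_nonneg_left (sum_nonneg fun _ => h.supplier_orderCost_nonneg hc)).trans
    (h.sum_orderCost_le_cost hc)

theorem supplier_order_eq_zero_of_cost_lt (h : TwoLevelPlan T d xR sR xS sS)
    (hc : NonnegCosts T fS pS hS fR pR hR) (ht : t ∈ Icc 1 T)
    (hlt : TwoLevelCost T fS pS hS fR pR hR xR sR xS sS < fS t) : xS t = 0 := by
  refine ((h.2.2.1 t ht).2.2.1.eq_or_lt.resolve_right fun hpos => hlt.not_ge ?_).symm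
  calc fS t ≤ orderCost (fS t) (pS t) (xS t) := fixedCost_le_orderCost (hc t ht).2.1 hpos
    _ ≤ ∑ t ∈ Icc 1 T, orderCost (fS t) (pS t) (xS t) :=
      single_le_sum (f := fun t => orderCost (fS t) (pS t) (xS t))
        (fun _ => h.supplier_orderCost_nonneg hc) ht
    _ ≤ TwoLevelCost T fS pS hS fR pR hR xR sR xS sS := h.sum_supplier_orderCost_le_cost hc

theorem retailer_order_eq_zero_of_cost_lt (h : TwoLevelPlan T d xR sR xS sS)
    (hc : NonnegCosts T fS pS hS fR pR hR) (ht : t ∈ Icc 1 T)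
    (hlt : TwoLevelCost T fS pS hS fR pR hR xR sR xS sS < fR t) : xR t = 0 := by
  refine ((h.2.2.1 t ht).1.eq_or_lt.resolve_right fun hpos => hlt.not_ge ?_).symm
  calc fR t ≤ orderCost (fR t) (pR t) (xR t) := fixedCost_le_orderCost (hc t ht).2.2.2.2.1 hpos
    _ ≤ ∑ t ∈ Icc 1 T, orderCost (fR t) (pR t) (xR t) :=
      single_le_sum (f := fun t => orderCost (fR t) (pR t) (xR t))
        (fun _ => h.retailer_orderCost_nonneg hc) ht
    _ ≤ TwoLevelCost T fS pS hS fR pR hR xR sR xS sS := h.sum_retailer_orderCost_le_cost hc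

theorem of_lag {y : ℕ → ℝ} (hy0 : y 0 = 0) (hy : ∀ t, 0 ≤ y t)
    (hd : ∀ t ∈ Icc 1 T, ∑ k ∈ Icc 1 t, d k ≤ ∑ k ∈ Icc 1 t, y (k - 1)) :
    TwoLevelPlan T d (fun t => y (t - 1)) (fun t => ∑ k ∈ Icc 1 t, (y (k - 1) - d k)) y y := by
  refine ⟨by simp, hy0, fun t ht => ⟨hy _, ?_, hy t, hy t⟩, fun t ht => ?_, fun t _ => rfl⟩
  · exact (sub_nonneg.2 (hd t ht)).trans_eq (sum_sub_distrib _ _).symm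
  · obtain ⟨k, rfl⟩ := Nat.exists_eq_add_of_le' (mem_Icc.1 ht).1
    simp only [add_tsub_cancel_right]
    rw [sum_Icc_succ_top (by lia), add_tsub_cancel_right]
    ring

end TwoLevelPlan

namespace SubsetSumInstance

/-- The demand `d` of the instance: `S` in the last period `2n + 1`. -/
def demand (n : ℕ) (S : ℝ) (t : ℕ) : ℝ :=
  if t = 2 * n + 1 then S else 0

/-- The supplier fixed cost `f^S` of the instance, with `F` (the paper's `2S`) as the prohibitive
cost. -/
def supplierFixedCost (n : ℕ) (F : ℝ) (t : ℕ) : ℝ :=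
  if t ≤ 2 * n ∧ t % 2 = 1 then 1 else F

/-- The supplier unit cost `p^S` of the instance. -/
noncomputable def supplierUnitCost (n : ℕ) (a : ℕ → ℝ) (t : ℕ) : ℝ :=
  if t ≤ 2 * n then 1 - 1 / a ((t + 1) / 2) else 0

/-- The retailer fixed cost `f^R` of the instance, with `F` (the paper's `2S`) as the prohibitive
cost. -/
def retailerFixedCost (n : ℕ) (F : ℝ) (t : ℕ) : ℝ :=
  if t ≤ 2 * n ∧ t % 2 = 0 then 0 else F

/-- The supplier inventory bound `u^S` of the instance. -/
def inventoryBound (n : ℕ) (a : ℕ → ℝ) (t : ℕ) : ℝ :=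
  if t ≤ 2 * n then a ((t + 1) / 2) else 0

/-- The cost of a plan of the instance. -/
noncomputable def cost (n : ℕ) (F : ℝ) (a xR sR xS sS : ℕ → ℝ) : ℝ :=
  TwoLevelCost (2 * n + 1) (supplierFixedCost n F) (supplierUnitCost n a) (fun _ => 0)
    (retailerFixedCost n F) (fun _ => 0) (fun _ => 0) xR sR xS sS

/-- A feasible plan of the instance whose cost is within the budget `S`. -/
def IsAffordable (n : ℕ) (S F : ℝ) (a xR sR xS sS : ℕ → ℝ) : Prop :=
  TwoLevelPlan (2 * n + 1) (demand n S) xR sR xS sS ∧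
  (∀ t ∈ Icc 1 (2 * n + 1), sS t ≤ inventoryBound n a t) ∧
  cost n F a xR sR xS sS ≤ S

/-- The supplier orders that place `z i` in period `2i - 1`, for `1 ≤ i ≤ n`. -/
def oddOrder (n : ℕ) (z : ℕ → ℝ) (t : ℕ) : ℝ :=
  if t ≤ 2 * n ∧ t % 2 = 1 then z ((t + 1) / 2) else 0

variable {n i t : ℕ} {S F : ℝ} {a z xR sR xS sS : ℕ → ℝ}

theorem sum_demand (t : ℕ) : ∑ k ∈ Icc 1 t, demand n S k = if 2 * n + 1 ≤ t then S else 0 := by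
  simp [demand]

theorem supplierFixedCost_odd (hi : i ∈ Icc 1 n) : supplierFixedCost n F (2 * i - 1) = 1 :=
  if_pos (by rw [mem_Icc] at hi; lia)

theorem supplierUnitCost_odd (hi : i ∈ Icc 1 n) :
    supplierUnitCost n a (2 * i - 1) = 1 - 1 / a i := by
  rw [mem_Icc] at hi
  rw [supplierUnitCost, if_pos (by lia), show (2 * i - 1 + 1) / 2 = i by lia]

theorem inventoryBound_odd (hi : i ∈ Icc 1 n) : inventoryBound n a (2 * i - 1) = a i := by
  rw [mem_Icc] at hi
  rw [inventoryBound, if_pos (by lia), show (2 * i - 1 + 1) / 2 = i by lia]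

theorem oddOrder_odd (hi : i ∈ Icc 1 n) : oddOrder n z (2 * i - 1) = z i := by
  rw [mem_Icc] at hi
  rw [oddOrder, if_pos (by lia), show (2 * i - 1 + 1) / 2 = i by lia]

theorem oddOrder_of_not_odd (ht : ¬(t ≤ 2 * n ∧ t % 2 = 1)) : oddOrder n z t = 0 :=
  if_neg ht

theorem succ_div_two_mem_Icc (ht1 : 1 ≤ t) (ht : t ≤ 2 * n) : (t + 1) / 2 ∈ Icc 1 n :=
  mem_Icc.2 (by lia)

theorem oddOrder_nonneg (hz : ∀ i ∈ Icc 1 n, 0 ≤ z i) (t : ℕ) : 0 ≤ oddOrder n z t := by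
  rw [oddOrder]
  split_ifs with ht
  · exact hz _ (succ_div_two_mem_Icc (by lia) ht.1)
  · exact le_rfl

theorem nonnegCosts (hF : 0 ≤ F) (ha : ∀ i ∈ Icc 1 n, 1 ≤ a i) :
    NonnegCosts (2 * n + 1) (supplierFixedCost n F) (supplierUnitCost n a) (fun _ => 0)
      (retailerFixedCost n F) (fun _ => 0) (fun _ => 0) := by
  intro t ht
  refine ⟨?_, ?_, le_rfl, ?_, le_rfl, le_rfl⟩
  · rw [supplierFixedCost]
    split_ifs
    exacts [zero_le_one, hF]
  · rw [supplierUnitCost]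
    split_ifs with hle
    · have h1 : 1 ≤ a ((t + 1) / 2) := ha _ (succ_div_two_mem_Icc (mem_Icc.1 ht).1 hle)
      exact sub_nonneg.2 (div_le_one_of_le₀ h1 (zero_le_one.trans h1))
    · exact le_rfl
  · rw [retailerFixedCost]
    split_ifs
    exacts [le_rfl, hF]

theorem sum_supplier_orderCost
    (hxS : ∀ t ∈ Icc 1 (2 * n + 1), ¬(t ≤ 2 * n ∧ t % 2 = 1) → xS t = 0) :
    ∑ t ∈ Icc 1 (2 * n + 1), orderCost (supplierFixedCost n F t) (supplierUnitCost n a t) (xS t) =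
      ∑ i ∈ Icc 1 n, orderCost 1 (1 - 1 / a i) (xS (2 * i - 1)) := by
  rw [sum_Icc_eq_sum_odd fun t ht hodd => by rw [hxS t ht hodd, orderCost_zero_right]]
  exact sum_congr rfl fun i hi => by rw [supplierFixedCost_odd hi, supplierUnitCost_odd hi]

namespace IsAffordable

theorem supplier_order_eq_zero (h : IsAffordable n S F a xR sR xS sS) (hF : 0 ≤ F) (hSF : S < F)
    (ha : ∀ i ∈ Icc 1 n, 1 ≤ a i) (ht : t ∈ Icc 1 (2 * n + 1))
    (hodd : ¬(t ≤ 2 * n ∧ t % 2 = 1)) : xS t = 0 := by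
  obtain ⟨hplan, -, hcost⟩ := h
  refine hplan.supplier_order_eq_zero_of_cost_lt (nonnegCosts hF ha) ht ?_
  rw [supplierFixedCost, if_neg hodd]
  exact hcost.trans_lt hSF

theorem retailer_order_eq_zero (h : IsAffordable n S F a xR sR xS sS) (hF : 0 ≤ F) (hSF : S < F)
    (ha : ∀ i ∈ Icc 1 n, 1 ≤ a i) (ht : t ∈ Icc 1 (2 * n + 1))
    (heven : ¬(t ≤ 2 * n ∧ t % 2 = 0)) : xR t = 0 := by
  obtain ⟨hplan, -, hcost⟩ := h
  refine hplan.retailer_order_eq_zero_of_cost_lt (nonnegCosts hF ha) ht ?_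
  rw [retailerFixedCost, if_neg heven]
  exact hcost.trans_lt hSF

theorem supplier_order_le (h : IsAffordable n S F a xR sR xS sS) (hF : 0 ≤ F) (hSF : S < F)
    (ha : ∀ i ∈ Icc 1 n, 1 ≤ a i) (hi : i ∈ Icc 1 n) : xS (2 * i - 1) ≤ a i := by
  have ht : 2 * i - 1 ∈ Icc 1 (2 * n + 1) := by
    rw [mem_Icc] at hi ⊢
    lia
  have heven : ¬(2 * i - 1 ≤ 2 * n ∧ (2 * i - 1) % 2 = 0) := by
    rw [mem_Icc] at hi
    lia
  have hxR : xR (2 * i - 1) = 0 := h.retailer_order_eq_zero hF hSF ha ht heven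
  obtain ⟨hplan, hbound, -⟩ := h
  calc xS (2 * i - 1) ≤ sS (2 * i - 1) :=
        hplan.supplier_order_le_stock_of_retailer_order_eq_zero ht hxR
    _ ≤ inventoryBound n a (2 * i - 1) := hbound _ ht
    _ = a i := inventoryBound_odd hi

theorem exists_order (h : IsAffordable n S F a xR sR xS sS) (hF : 0 ≤ F) (hSF : S < F)
    (ha : ∀ i ∈ Icc 1 n, 1 ≤ a i) :
    ∃ z : ℕ → ℝ, (∀ i ∈ Icc 1 n, 0 ≤ z i ∧ z i ≤ a i) ∧ S ≤ ∑ i ∈ Icc 1 n, z i ∧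
      ∑ i ∈ Icc 1 n, orderCost 1 (1 - 1 / a i) (z i) ≤ S := by
  have hxS : ∀ t ∈ Icc 1 (2 * n + 1), ¬(t ≤ 2 * n ∧ t % 2 = 1) → xS t = 0 := fun t =>
    h.supplier_order_eq_zero hF hSF ha
  have hle : ∀ i ∈ Icc 1 n, xS (2 * i - 1) ≤ a i := fun i => h.supplier_order_le hF hSF ha
  obtain ⟨hplan, -, hcost⟩ := h
  refine ⟨fun i => xS (2 * i - 1), fun i hi => ⟨?_, hle i hi⟩, ?_, ?_⟩
  · exact (hplan.2.2.1 _ (by rw [mem_Icc] at hi ⊢; lia)).2.2.1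
  · rw [← sum_Icc_eq_sum_odd hxS]
    simpa only [sum_demand, le_refl, if_true] using hplan.sum_demand_le_sum_supplier_order
  · rw [← sum_supplier_orderCost (F := F) hxS]
    exact (hplan.sum_supplier_orderCost_le_cost (nonnegCosts hF ha)).trans hcost

end IsAffordable

theorem sum_oddOrder (n : ℕ) (z : ℕ → ℝ) :
    ∑ t ∈ Icc 1 (2 * n + 1), oddOrder n z t = ∑ i ∈ Icc 1 n, z i := by
  rw [sum_Icc_eq_sum_odd fun t _ => oddOrder_of_not_odd]
  exact sum_congr rfl fun i hi => oddOrder_odd hi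

theorem sum_lag_oddOrder (n : ℕ) (z : ℕ → ℝ) :
    ∑ t ∈ Icc 1 (2 * n + 1), oddOrder n z (t - 1) = ∑ i ∈ Icc 1 n, z i := by
  have h := stock_zero_add_sum_inflow (T := 2 * n + 1) (s := oddOrder n z) (x := oddOrder n z)
    (y := fun t => oddOrder n z (t - 1)) fun t _ => rfl
  have hfirst : oddOrder n z 0 = 0 := oddOrder_of_not_odd (by lia)
  have hlast : oddOrder n z (2 * n + 1) = 0 := oddOrder_of_not_odd (by lia)
  rw [hfirst, hlast, zero_add, add_zero, sum_oddOrder] at h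
  exact h.symm

theorem twoLevelPlan_oddOrder (hz : ∀ i ∈ Icc 1 n, 0 ≤ z i) (hsum : S ≤ ∑ i ∈ Icc 1 n, z i) :
    TwoLevelPlan (2 * n + 1) (demand n S) (fun t => oddOrder n z (t - 1))
      (fun t => ∑ k ∈ Icc 1 t, (oddOrder n z (k - 1) - demand n S k))
      (oddOrder n z) (oddOrder n z) := by
  refine .of_lag (oddOrder_of_not_odd (by lia)) (oddOrder_nonneg hz) fun t ht => ?_
  rw [sum_demand]
  split_ifs with hlast
  · obtain rfl : t = 2 * n + 1 := (mem_Icc.1 ht).2.antisymm hlast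
    rwa [sum_lag_oddOrder]
  · exact sum_nonneg fun k _ => oddOrder_nonneg hz _

theorem oddOrder_le_inventoryBound (hz : ∀ i ∈ Icc 1 n, z i ≤ a i) (ha : ∀ i ∈ Icc 1 n, 0 ≤ a i)
    (ht : 1 ≤ t) : oddOrder n z t ≤ inventoryBound n a t := by
  rw [oddOrder, inventoryBound]
  split_ifs with hodd hle hle
  · exact hz _ (succ_div_two_mem_Icc ht hle)
  · exact absurd hodd.1 hle
  · exact ha _ (succ_div_two_mem_Icc ht hle)
  · exact le_rfl

theorem cost_oddOrder (F : ℝ) (a z sR sS : ℕ → ℝ) :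
    cost n F a (fun t => oddOrder n z (t - 1)) sR (oddOrder n z) sS =
      ∑ i ∈ Icc 1 n, orderCost 1 (1 - 1 / a i) (z i) := by
  have hsupplier : ∑ t ∈ Icc 1 (2 * n + 1),
      orderCost (supplierFixedCost n F t) (supplierUnitCost n a t) (oddOrder n z t) =
        ∑ i ∈ Icc 1 n, orderCost 1 (1 - 1 / a i) (z i) := by
    rw [sum_supplier_orderCost fun t _ => oddOrder_of_not_odd]
    exact sum_congr rfl fun i hi => by rw [oddOrder_odd hi]
  have hretailer : ∑ t ∈ Icc 1 (2 * n + 1),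
      orderCost (retailerFixedCost n F t) 0 (oddOrder n z (t - 1)) = 0 := by
    refine sum_eq_zero fun t ht => ?_
    by_cases heven : t ≤ 2 * n ∧ t % 2 = 0
    · simp [retailerFixedCost, heven, orderCost]
    · rw [mem_Icc] at ht
      rw [oddOrder_of_not_odd (by lia), orderCost_zero_right]
  rw [cost, twoLevelCost_eq_sum_orderCost, hsupplier, hretailer]
  simp

theorem exists_isAffordable_iff_exists_order (hF : 0 ≤ F) (hSF : S < F)
    (ha : ∀ i ∈ Icc 1 n, 1 ≤ a i) :
    (∃ xR sR xS sS, IsAffordable n S F a xR sR xS sS) ↔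
    ∃ z : ℕ → ℝ, (∀ i ∈ Icc 1 n, 0 ≤ z i ∧ z i ≤ a i) ∧ S ≤ ∑ i ∈ Icc 1 n, z i ∧
      ∑ i ∈ Icc 1 n, orderCost 1 (1 - 1 / a i) (z i) ≤ S := by
  constructor
  · rintro ⟨xR, sR, xS, sS, h⟩
    exact h.exists_order hF hSF ha
  · rintro ⟨z, hz, hsum, hcost⟩
    refine ⟨_, _, _, _, twoLevelPlan_oddOrder (fun i hi => (hz i hi).1) hsum, fun t ht => ?_, ?_⟩
    · exact oddOrder_le_inventoryBound (fun i hi => (hz i hi).2)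
        (fun i hi => zero_le_one.trans (ha i hi)) (mem_Icc.1 ht).1
    · rwa [cost_oddOrder]

end SubsetSumInstance

theorem stmt9_general (n : ℕ) {S F : ℝ} {a : ℕ → ℝ} (hF : 0 ≤ F) (hSF : S < F)
    (ha : ∀ i ∈ Icc 1 n, 1 ≤ a i) :
    (∃ xR sR xS sS, SubsetSumInstance.IsAffordable n S F a xR sR xS sS) ↔
    ∃ A ⊆ Icc 1 n, ∑ i ∈ A, a i = S :=
  (SubsetSumInstance.exists_isAffordable_iff_exists_order hF hSF ha).trans
    (exists_order_iff_exists_subset_sum (fun i hi => zero_lt_one.trans_le (ha i hi)) S)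

/-- Reduction from Subset Sum: for the `2ULS-IB_S` instance with `T = 2n+1`,
demands `d t = 0` for `t ≤ 2n`, `d T = S`; supplier fixed costs `1` at odd `t ≤ 2n`
and `2S` elsewhere; retailer fixed costs `0` at even `t ≤ 2n` and `2S` elsewhere;
zero holding costs; `p^R = 0`; `p^S t = 1 − 1/a_{⌈t/2⌉}` for `t ≤ 2n` and `p^S T = 0`;
supplier inventory bounds `u^S t = a_{⌈t/2⌉}` for `t ≤ 2n` and `u^S T = 0`:
there is a feasible plan of cost at most `S` iff some subset of `{a_1,…,a_n}` sums
to `S`. -/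
theorem stmt9 (n S : ℕ) (hn : 1 ≤ n) (hS : 0 < S) (a : ℕ → ℕ)
    (ha : ∀ i ∈ Finset.Icc 1 n, 0 < a i) :
    (∃ xR sR xS sS : ℕ → ℝ,
      TwoLevelPlan (2 * n + 1) (fun t => if t = 2 * n + 1 then (S : ℝ) else 0) xR sR xS sS ∧
      (∀ t ∈ Finset.Icc 1 (2 * n + 1),
        sS t ≤ (if t ≤ 2 * n then (a ((t + 1) / 2) : ℝ) else 0)) ∧
      TwoLevelCost (2 * n + 1)
        (fun t => if t ≤ 2 * n ∧ t % 2 = 1 then 1 else 2 * S)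
        (fun t => if t ≤ 2 * n then 1 - 1 / (a ((t + 1) / 2) : ℝ) else 0)
        (fun _ => 0)
        (fun t => if t ≤ 2 * n ∧ t % 2 = 0 then 0 else 2 * S)
        (fun _ => 0)
        (fun _ => 0) xR sR xS sS ≤ S) ↔
    (∃ A : Finset ℕ, A ⊆ Finset.Icc 1 n ∧ ∑ i ∈ A, a i = S) :=
  (stmt9_general n (F := 2 * S) (a := fun i => a i) (by positivity)
    (lt_two_mul_self (Nat.cast_pos.2 hS)) fun i hi => Nat.one_le_cast.2 (ha i hi)).trans
    (by norm_cast)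
end

section
/- Let (d, f, p, h, u) be a single-level no-lot-splitting instance over T periods with nonnegative integer demands d_t and nonnegative real costs and bounds, and suppose it admits at least one feasible NLS plan; let C* denote the minimum cost of a feasible single-level NLS plan. Let M be a real number with M > C*. Consider the two-level no-lot-splitting instance with the same demands d, supplier costs f^S = f, p^S = p, h^S = h, supplier inventory bounds u^S = u, retailer costs f^R_t = p^R_t = 0 and h^R_t = M for all t, and no retailer inventory bound. Then the minimum total cost over all feasible two-level NLS plans of this instance equals C*. -/
/-- Order quantities induced by a no-lot-splitting assignment `σ`:
`x k = Σ_{t : d t > 0, σ t = k} d t`. -/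
def nlsX (T : ℕ) (d : ℕ → ℕ) (σ : ℕ → ℕ) (k : ℕ) : ℕ :=
  ∑ t ∈ (Finset.Icc 1 T).filter (fun t => 0 < d t ∧ σ t = k), d t

/-- Inventories induced by delivery periods `σ`:
`s t = Σ_{k : d k > 0, σ k ≤ t < k} d k`. -/
def nlsS (T : ℕ) (d : ℕ → ℕ) (σ : ℕ → ℕ) (t : ℕ) : ℕ :=
  ∑ k ∈ (Finset.Icc 1 T).filter (fun k => 0 < d k ∧ σ k ≤ t ∧ t < k), d k

/-- Supplier inventories of a two-level NLS plan `(σR, σS)`: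
`sS t = Σ_{k : d k > 0, σS k ≤ t < σR k} d k`. -/
def nls2SS (T : ℕ) (d : ℕ → ℕ) (σR σS : ℕ → ℕ) (t : ℕ) : ℕ :=
  ∑ k ∈ (Finset.Icc 1 T).filter (fun k => 0 < d k ∧ σS k ≤ t ∧ t < σR k), d k

/-- Cost of a single-level NLS plan. -/
noncomputable def nlsCost (T : ℕ) (d : ℕ → ℕ) (f p h : ℕ → ℝ) (σ : ℕ → ℕ) : ℝ :=
  ∑ t ∈ Finset.Icc 1 T,
    ((if 0 < nlsX T d σ t then f t else 0) + p t * (nlsX T d σ t : ℝ) +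
      h t * (nlsS T d σ t : ℝ))

/-- Cost of a two-level NLS plan `(σR, σS)`. -/
noncomputable def nls2Cost (T : ℕ) (d : ℕ → ℕ) (fS pS hS fR pR hR : ℕ → ℝ)
    (σR σS : ℕ → ℕ) : ℝ :=
  ∑ t ∈ Finset.Icc 1 T,
    ((if 0 < nlsX T d σS t then fS t else 0) + pS t * (nlsX T d σS t : ℝ) +
      hS t * (nls2SS T d σR σS t : ℝ) +
     (if 0 < nlsX T d σR t then fR t else 0) + pR t * (nlsX T d σR t : ℝ) +
      hR t * (nlsS T d σR t : ℝ))

/-! A retailer who never stores anything leaves the supplier with exactly the single-level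
problem, so single-level plans and two-level plans of this kind correspond, with equal costs.
A retailer who does store something stores at least one unit in some period, demands being
integers; holding that unit already costs at least `C*`, and no other cost is negative. -/

/-- The lot-for-lot policy: every positive demand is ordered in the very period in which it
occurs. This is the retailer's policy under which the two-level problem collapses to the
supplier's; `σ` is unconstrained in periods without demand. -/
def IsLotForLot (T : ℕ) (d σ : ℕ → ℕ) : Prop :=
  ∀ t ∈ Finset.Icc 1 T, 0 < d t → σ t = t

section Inventory

variable {T : ℕ} {d σ : ℕ → ℕ}

theorem IsLotForLot.nlsS_eq_zero (hσ : IsLotForLot T d σ) (t : ℕ) : nlsS T d σ t = 0 := by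
  refine Finset.sum_eq_zero fun k hk ↦ ?_
  obtain ⟨hkT, hdk, hordered, hlater⟩ := Finset.mem_filter.mp hk
  have hσk : σ k = k := hσ k hkT hdk
  omega

theorem IsLotForLot.nls2SS_eq_nlsS (hσ : IsLotForLot T d σ) (σS : ℕ → ℕ) (t : ℕ) :
    nls2SS T d σ σS t = nlsS T d σS t :=
  Finset.sum_congr
    (Finset.filter_congr fun k hk ↦ and_congr_right fun hdk ↦ by rw [hσ k hk hdk])
    fun _ _ ↦ rfl

theorem demand_le_nlsS {k t : ℕ} (hk : k ∈ Finset.Icc 1 T) (hσ : σ k ≤ t) (ht : t < k) :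
    d k ≤ nlsS T d σ t := by
  obtain hdk | hdk := (d k).eq_zero_or_pos
  · simp [hdk]
  · exact Finset.single_le_sum (f := d) (fun _ _ ↦ Nat.zero_le _)
      (Finset.mem_filter.mpr ⟨hk, hdk, hσ, ht⟩)

end Inventory

section Cost

variable {T : ℕ} {d σ σR σS : ℕ → ℕ} {f p h fS pS hS fR pR hR : ℕ → ℝ}

theorem IsLotForLot.nls2Cost_eq_nlsCost (hσR : IsLotForLot T d σR) :
    nls2Cost T d fS pS hS (fun _ ↦ 0) (fun _ ↦ 0) hR σR σS = nlsCost T d fS pS hS σS :=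
  Finset.sum_congr rfl fun t _ ↦ by simp [hσR.nls2SS_eq_nlsS, hσR.nlsS_eq_zero]

theorem nlsCost_retailer_le_nls2Cost (hfS : ∀ t ∈ Finset.Icc 1 T, 0 ≤ fS t)
    (hpS : ∀ t ∈ Finset.Icc 1 T, 0 ≤ pS t) (hhS : ∀ t ∈ Finset.Icc 1 T, 0 ≤ hS t) :
    nlsCost T d fR pR hR σR ≤ nls2Cost T d fS pS hS fR pR hR σR σS := by
  refine Finset.sum_le_sum fun t ht ↦ ?_
  have supplier_nonneg : 0 ≤ (if 0 < nlsX T d σS t then fS t else 0) +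
      pS t * (nlsX T d σS t : ℝ) + hS t * (nls2SS T d σR σS t : ℝ) := by
    have := hfS t ht
    have := hpS t ht
    have := hhS t ht
    positivity
  linarith

theorem sum_holding_le_nlsCost (hf : ∀ t ∈ Finset.Icc 1 T, 0 ≤ f t)
    (hp : ∀ t ∈ Finset.Icc 1 T, 0 ≤ p t) :
    ∑ t ∈ Finset.Icc 1 T, h t * (nlsS T d σ t : ℝ) ≤ nlsCost T d f p h σ := by
  refine Finset.sum_le_sum fun t ht ↦ le_add_of_nonneg_left ?_
  have := hf t ht
  have := hp t ht
  positivity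

theorem nlsCost_nonneg (hf : ∀ t ∈ Finset.Icc 1 T, 0 ≤ f t)
    (hp : ∀ t ∈ Finset.Icc 1 T, 0 ≤ p t) (hh : ∀ t ∈ Finset.Icc 1 T, 0 ≤ h t) :
    0 ≤ nlsCost T d f p h σ :=
  (Finset.sum_nonneg fun t ht ↦ mul_nonneg (hh t ht) (Nat.cast_nonneg _)).trans
    (sum_holding_le_nlsCost hf hp)

theorem exists_holding_le_nlsCost_of_not_isLotForLot (hf : ∀ t ∈ Finset.Icc 1 T, 0 ≤ f t)
    (hp : ∀ t ∈ Finset.Icc 1 T, 0 ≤ p t) (hh : ∀ t ∈ Finset.Icc 1 T, 0 ≤ h t)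
    (hσ : ∀ t ∈ Finset.Icc 1 T, 0 < d t → 1 ≤ σ t ∧ σ t ≤ t) (hlot : ¬IsLotForLot T d σ) :
    ∃ t ∈ Finset.Icc 1 T, h t ≤ nlsCost T d f p h σ := by
  obtain ⟨k, hk, hdk, hne⟩ : ∃ k ∈ Finset.Icc 1 T, 0 < d k ∧ σ k ≠ k := by
    simpa only [IsLotForLot, not_forall, exists_prop] using hlot
  obtain ⟨hσ_pos, hσ_le⟩ := hσ k hk hdk
  have early : σ k < k := lt_of_le_of_ne hσ_le hne
  have hσk : σ k ∈ Finset.Icc 1 T :=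
    Finset.mem_Icc.mpr ⟨hσ_pos, hσ_le.trans (Finset.mem_Icc.mp hk).2⟩
  have stock : (1 : ℝ) ≤ nlsS T d σ (σ k) :=
    mod_cast hdk.trans_le (demand_le_nlsS hk le_rfl early)
  refine ⟨σ k, hσk, ?_⟩
  calc h (σ k) ≤ h (σ k) * (nlsS T d σ (σ k) : ℝ) := le_mul_of_one_le_right (hh _ hσk) stock
    _ ≤ ∑ t ∈ Finset.Icc 1 T, h t * (nlsS T d σ t : ℝ) :=
      Finset.single_le_sum (f := fun t ↦ h t * (nlsS T d σ t : ℝ))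
        (fun t ht ↦ mul_nonneg (hh t ht) (Nat.cast_nonneg _)) hσk
    _ ≤ nlsCost T d f p h σ := sum_holding_le_nlsCost hf hp

end Cost

theorem stmt12_general (T : ℕ) (d : ℕ → ℕ) (f p h u hR : ℕ → ℝ)
    (hf : ∀ t ∈ Finset.Icc 1 T, 0 ≤ f t) (hp : ∀ t ∈ Finset.Icc 1 T, 0 ≤ p t)
    (hh : ∀ t ∈ Finset.Icc 1 T, 0 ≤ h t) (Cstar : ℝ)
    (hCstar : IsLeast {c : ℝ | ∃ σ : ℕ → ℕ,
        (∀ t ∈ Finset.Icc 1 T, 0 < d t → 1 ≤ σ t ∧ σ t ≤ t) ∧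
        (∀ t ∈ Finset.Icc 1 T, (nlsS T d σ t : ℝ) ≤ u t) ∧
        c = nlsCost T d f p h σ} Cstar)
    (hCstar_le : ∀ t ∈ Finset.Icc 1 T, Cstar ≤ hR t) :
    IsLeast {c : ℝ | ∃ σR σS : ℕ → ℕ,
      (∀ t ∈ Finset.Icc 1 T, 0 < d t → 1 ≤ σS t ∧ σS t ≤ σR t ∧ σR t ≤ t) ∧
      (∀ t ∈ Finset.Icc 1 T, (nls2SS T d σR σS t : ℝ) ≤ u t) ∧
      c = nls2Cost T d f p h (fun _ => 0) (fun _ => 0) hR σR σS} Cstar := by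
  obtain ⟨⟨σ, hσ, hσu, hσC⟩, hmin⟩ := hCstar
  constructor
  · have hid : IsLotForLot T d id := fun _ _ _ ↦ rfl
    refine ⟨id, σ, fun t ht hdt ↦ ⟨(hσ t ht hdt).1, (hσ t ht hdt).2, le_rfl⟩, ?_, ?_⟩
    · simpa only [hid.nls2SS_eq_nlsS] using hσu
    · rw [hid.nls2Cost_eq_nlsCost, hσC]
  · rintro _ ⟨σR, σS, hplan, hbound, rfl⟩
    by_cases hlot : IsLotForLot T d σR
    · simp only [hlot.nls2SS_eq_nlsS] at hbound
      rw [hlot.nls2Cost_eq_nlsCost]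
      exact hmin ⟨σS, fun t ht hdt ↦
        ⟨(hplan t ht hdt).1, (hplan t ht hdt).2.1.trans (hplan t ht hdt).2.2⟩, hbound, rfl⟩
    · have hCstar_nonneg : 0 ≤ Cstar := hσC ▸ nlsCost_nonneg hf hp hh
      obtain ⟨t, ht, hRt⟩ := exists_holding_le_nlsCost_of_not_isLotForLot
        (f := fun _ ↦ 0) (p := fun _ ↦ 0) (fun _ _ ↦ le_rfl) (fun _ _ ↦ le_rfl)
        (fun t ht ↦ hCstar_nonneg.trans (hCstar_le t ht))
        (fun t ht hdt ↦ ⟨(hplan t ht hdt).1.trans (hplan t ht hdt).2.1, (hplan t ht hdt).2.2⟩)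
        hlot
      exact (hCstar_le t ht).trans (hRt.trans (nlsCost_retailer_le_nls2Cost hf hp hh))

/-- Reduction 2ULS-IB_S-NLS ⟵ ULS-IB-NLS: given a single-level NLS instance
`(d, f, p, h, u)` with integer demands, feasible, with minimum cost `C*`, and
`M > C*`, the two-level NLS instance with supplier data `(f, p, h, u)` and retailer
costs `f^R = p^R = 0`, `h^R = M` (no retailer bound) has minimum cost `C*`. -/
theorem stmt12 (T : ℕ) (hT : 1 ≤ T) (d : ℕ → ℕ) (f p h u : ℕ → ℝ)
    (hf : ∀ t ∈ Finset.Icc 1 T, 0 ≤ f t) (hp : ∀ t ∈ Finset.Icc 1 T, 0 ≤ p t)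
    (hh : ∀ t ∈ Finset.Icc 1 T, 0 ≤ h t) (hu : ∀ t ∈ Finset.Icc 1 T, 0 ≤ u t)
    (Cstar M : ℝ)
    (hCstar : IsLeast {c : ℝ | ∃ σ : ℕ → ℕ,
        (∀ t ∈ Finset.Icc 1 T, 0 < d t → 1 ≤ σ t ∧ σ t ≤ t) ∧
        (∀ t ∈ Finset.Icc 1 T, (nlsS T d σ t : ℝ) ≤ u t) ∧
        c = nlsCost T d f p h σ} Cstar)
    (hM : Cstar < M) :
    IsLeast {c : ℝ | ∃ σR σS : ℕ → ℕ,
      (∀ t ∈ Finset.Icc 1 T, 0 < d t → 1 ≤ σS t ∧ σS t ≤ σR t ∧ σR t ≤ t) ∧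
      (∀ t ∈ Finset.Icc 1 T, (nls2SS T d σR σS t : ℝ) ≤ u t) ∧
      c = nls2Cost T d f p h (fun _ => 0) (fun _ => 0) (fun _ => M) σR σS} Cstar := by
  exact stmt12_general T d f p h u (fun _ => M) hf hp hh Cstar hCstar fun _ _ => hM.le
end

section
/- Let (d, f, p, h, u) be a single-level no-lot-splitting instance over T periods with nonnegative integer demands d_t and nonnegative real costs and bounds, admitting at least one feasible NLS plan, with minimum cost C*. Let M > C* be real and let u^R_t ≥ 0 (t = 1,…,T) be arbitrary nonnegative retailer inventory bounds. Consider the two-level no-lot-splitting instance with the same demands d, supplier costs f^S = f, p^S = p, h^S = h, supplier inventory bounds u^S = u, retailer costs f^R_t = p^R_t = 0 and h^R_t = M for all t, and retailer inventory bounds u^R. Then the minimum total cost over all feasible two-level NLS plans of this instance equals C*. In particular, imposing inventory bounds at both levels does not change the optimal value of this reduction instance. -/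
/-! The total cost is a supplier part plus a single-level cost of the retailer. If the retailer
orders every demand in its own period, then it holds no inventory, the supplier faces exactly the
single-level instance, and the retailer pays a constant. If instead some demand `k` is ordered
early, in period `σR k < k`, then by integrality the retailer holds at least one unit in that
period, and the holding cost of that unit alone is at least the claimed optimum. -/

/-- The set of costs of the feasible plans of a single-level NLS instance. -/
def nlsCosts (T : ℕ) (d : ℕ → ℕ) (f p h u : ℕ → ℝ) : Set ℝ :=
  {c : ℝ | ∃ σ : ℕ → ℕ,
    (∀ t ∈ Finset.Icc 1 T, 0 < d t → 1 ≤ σ t ∧ σ t ≤ t) ∧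
    (∀ t ∈ Finset.Icc 1 T, (nlsS T d σ t : ℝ) ≤ u t) ∧
    c = nlsCost T d f p h σ}

/-- The set of costs of the feasible plans of a two-level NLS instance with inventory bounds at both
levels. -/
def nls2Costs (T : ℕ) (d : ℕ → ℕ) (fS pS hS uS fR pR hR uR : ℕ → ℝ) : Set ℝ :=
  {c : ℝ | ∃ σR σS : ℕ → ℕ,
    (∀ t ∈ Finset.Icc 1 T, 0 < d t → 1 ≤ σS t ∧ σS t ≤ σR t ∧ σR t ≤ t) ∧
    (∀ t ∈ Finset.Icc 1 T, (nls2SS T d σR σS t : ℝ) ≤ uS t) ∧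
    (∀ t ∈ Finset.Icc 1 T, (nlsS T d σR t : ℝ) ≤ uR t) ∧
    c = nls2Cost T d fS pS hS fR pR hR σR σS}

/-- The supplier's share of the cost of a two-level NLS plan `(σR, σS)`; for `σR = id` it is by
definition the single-level cost of `σS`. -/
noncomputable def nls2SupplierCost (T : ℕ) (d : ℕ → ℕ) (f p h : ℕ → ℝ) (σR σS : ℕ → ℕ) : ℝ :=
  ∑ t ∈ Finset.Icc 1 T,
    ((if 0 < nlsX T d σS t then f t else 0) + p t * (nlsX T d σS t : ℝ) +
      h t * (nls2SS T d σR σS t : ℝ))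

/-- A plan is just-in-time if every positive demand is ordered in its own period. -/
def IsJustInTime (T : ℕ) (d σ : ℕ → ℕ) : Prop :=
  ∀ t ∈ Finset.Icc 1 T, 0 < d t → σ t = t

/-- The ordering cost of the just-in-time plans, which is their total cost because they carry no
inventory. -/
noncomputable def justInTimeCost (T : ℕ) (d : ℕ → ℕ) (f p : ℕ → ℝ) : ℝ :=
  ∑ t ∈ Finset.Icc 1 T, ((if 0 < d t then f t else 0) + p t * (d t : ℝ))

section

variable {T : ℕ} {d : ℕ → ℕ} {f p h u : ℕ → ℝ} {σ σR σS : ℕ → ℕ}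

theorem nls2Cost_eq_supplier_add_retailer {fS pS hS fR pR hR : ℕ → ℝ} :
    nls2Cost T d fS pS hS fR pR hR σR σS =
      nls2SupplierCost T d fS pS hS σR σS + nlsCost T d fR pR hR σR := by
  simp only [nls2Cost, nls2SupplierCost, nlsCost, ← Finset.sum_add_distrib, add_assoc]

theorem ordering_cost_nonneg {a b : ℝ} (ha : 0 ≤ a) (hb : 0 ≤ b) (x : ℕ) :
    0 ≤ (if 0 < x then a else 0) + b * (x : ℝ) := by
  positivity

theorem nls2SupplierCost_nonneg (hf : ∀ t ∈ Finset.Icc 1 T, 0 ≤ f t)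
    (hp : ∀ t ∈ Finset.Icc 1 T, 0 ≤ p t) (hh : ∀ t ∈ Finset.Icc 1 T, 0 ≤ h t) :
    0 ≤ nls2SupplierCost T d f p h σR σS :=
  Finset.sum_nonneg fun t ht =>
    add_nonneg (ordering_cost_nonneg (hf t ht) (hp t ht) _)
      (mul_nonneg (hh t ht) (Nat.cast_nonneg _))

theorem nonneg_of_mem_nlsCosts (hf : ∀ t ∈ Finset.Icc 1 T, 0 ≤ f t)
    (hp : ∀ t ∈ Finset.Icc 1 T, 0 ≤ p t) (hh : ∀ t ∈ Finset.Icc 1 T, 0 ≤ h t) {c : ℝ}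
    (hc : c ∈ nlsCosts T d f p h u) : 0 ≤ c := by
  obtain ⟨σ, -, -, rfl⟩ := hc
  exact nls2SupplierCost_nonneg (σR := id) hf hp hh

theorem justInTimeCost_nonneg (hf : ∀ t ∈ Finset.Icc 1 T, 0 ≤ f t)
    (hp : ∀ t ∈ Finset.Icc 1 T, 0 ≤ p t) : 0 ≤ justInTimeCost T d f p :=
  Finset.sum_nonneg fun t ht => ordering_cost_nonneg (hf t ht) (hp t ht) _

theorem justInTimeCost_zero : justInTimeCost T d (fun _ => 0) (fun _ => 0) = 0 := by
  simp [justInTimeCost]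

theorem isJustInTime_id : IsJustInTime T d id := fun _ _ _ => rfl

namespace IsJustInTime

theorem nlsX_eq (hσ : IsJustInTime T d σ) {t : ℕ} (ht : t ∈ Finset.Icc 1 T) :
    nlsX T d σ t = d t := by
  have hfilter : ∀ k ∈ Finset.Icc 1 T, (0 < d k ∧ σ k = t) ↔ (0 < d k ∧ k = t) :=
    fun k hk => and_congr_right fun hd => by rw [hσ k hk hd]
  rw [nlsX, Finset.filter_congr hfilter, Finset.sum_filter, Finset.sum_eq_single_of_mem t ht]
  · rcases (d t).eq_zero_or_pos with hd | hd <;> simp [hd]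
  · intro k _ hkt
    simp [hkt]

theorem nlsS_eq_zero (hσ : IsJustInTime T d σ) (t : ℕ) : nlsS T d σ t = 0 := by
  refine Finset.sum_eq_zero fun k hk => ?_
  obtain ⟨hk, hd, hσt, htk⟩ := Finset.mem_filter.1 hk
  have := hσ k hk hd
  omega

theorem nls2SS_eq_nlsS (hσR : IsJustInTime T d σR) (t : ℕ) :
    nls2SS T d σR σS t = nlsS T d σS t := by
  refine Finset.sum_congr (Finset.filter_congr fun k hk => ?_) fun _ _ => rfl
  exact and_congr_right fun hd => by rw [hσR k hk hd]

theorem nlsCost_eq (hσ : IsJustInTime T d σ) :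
    nlsCost T d f p h σ = justInTimeCost T d f p := by
  refine Finset.sum_congr rfl fun t ht => ?_
  rw [hσ.nlsX_eq ht, hσ.nlsS_eq_zero, Nat.cast_zero, mul_zero, add_zero]

theorem nls2Cost_eq {fS pS hS fR pR hR : ℕ → ℝ} (hσR : IsJustInTime T d σR) :
    nls2Cost T d fS pS hS fR pR hR σR σS =
      nlsCost T d fS pS hS σS + justInTimeCost T d fR pR := by
  rw [nls2Cost_eq_supplier_add_retailer, hσR.nlsCost_eq]
  simp only [nls2SupplierCost, hσR.nls2SS_eq_nlsS, nlsCost]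

end IsJustInTime

theorem add_justInTimeCost_mem_nls2Costs {fR pR hR uR : ℕ → ℝ} {c : ℝ}
    (hc : c ∈ nlsCosts T d f p h u) (huR : ∀ t ∈ Finset.Icc 1 T, 0 ≤ uR t) :
    c + justInTimeCost T d fR pR ∈ nls2Costs T d f p h u fR pR hR uR := by
  obtain ⟨σ, hσ, hu, rfl⟩ := hc
  refine ⟨id, σ, fun t ht hd => ⟨(hσ t ht hd).1, (hσ t ht hd).2, le_rfl⟩, hu, fun t ht => ?_,
    isJustInTime_id.nls2Cost_eq.symm⟩
  simpa only [isJustInTime_id.nlsS_eq_zero, Nat.cast_zero] using huR t ht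

theorem nlsS_pos {k t : ℕ} (hk : k ∈ Finset.Icc 1 T) (hd : 0 < d k) (hσ : σ k ≤ t) (htk : t < k) :
    0 < nlsS T d σ t :=
  Finset.sum_pos' (fun _ _ => Nat.zero_le _) ⟨k, Finset.mem_filter.2 ⟨hk, hd, hσ, htk⟩, hd⟩

theorem exists_nlsS_pos_of_not_isJustInTime
    (hσ : ∀ t ∈ Finset.Icc 1 T, 0 < d t → 1 ≤ σ t ∧ σ t ≤ t) (hjit : ¬ IsJustInTime T d σ) :
    ∃ t ∈ Finset.Icc 1 T, 0 < nlsS T d σ t := by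
  simp only [IsJustInTime, not_forall] at hjit
  obtain ⟨k, hk, hd, hne⟩ := hjit
  obtain ⟨hpos, hle⟩ := hσ k hk hd
  exact ⟨σ k, Finset.mem_Icc.2 ⟨hpos, hle.trans (Finset.mem_Icc.1 hk).2⟩,
    nlsS_pos hk hd le_rfl (hle.lt_of_ne hne)⟩

theorem le_nlsCost_of_nlsS_pos (hf : ∀ t ∈ Finset.Icc 1 T, 0 ≤ f t)
    (hp : ∀ t ∈ Finset.Icc 1 T, 0 ≤ p t) (hh : ∀ t ∈ Finset.Icc 1 T, 0 ≤ h t) {t : ℕ}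
    (ht : t ∈ Finset.Icc 1 T) (hs : 0 < nlsS T d σ t) : h t ≤ nlsCost T d f p h σ := by
  have hordering := fun k hk => ordering_cost_nonneg (hf k hk) (hp k hk) (nlsX T d σ k)
  have hholding := fun k hk => mul_nonneg (hh k hk) (Nat.cast_nonneg (nlsS T d σ k))
  calc h t ≤ h t * (nlsS T d σ t : ℝ) :=
        le_mul_of_one_le_right (hh t ht) (Nat.one_le_cast.2 hs)
    _ ≤ (if 0 < nlsX T d σ t then f t else 0) + p t * (nlsX T d σ t : ℝ) +
          h t * (nlsS T d σ t : ℝ) := le_add_of_nonneg_left (hordering t ht)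
    _ ≤ nlsCost T d f p h σ :=
        Finset.single_le_sum (fun k hk => add_nonneg (hordering k hk) (hholding k hk)) ht

end

theorem stmt13_general {T : ℕ} {d : ℕ → ℕ} {f p h u fR pR hR uR : ℕ → ℝ} {Cstar : ℝ}
    (hf : ∀ t ∈ Finset.Icc 1 T, 0 ≤ f t) (hp : ∀ t ∈ Finset.Icc 1 T, 0 ≤ p t)
    (hh : ∀ t ∈ Finset.Icc 1 T, 0 ≤ h t) (hfR : ∀ t ∈ Finset.Icc 1 T, 0 ≤ fR t)
    (hpR : ∀ t ∈ Finset.Icc 1 T, 0 ≤ pR t) (hCstar : IsLeast (nlsCosts T d f p h u) Cstar)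
    (hhR : ∀ t ∈ Finset.Icc 1 T, Cstar + justInTimeCost T d fR pR ≤ hR t)
    (huR : ∀ t ∈ Finset.Icc 1 T, 0 ≤ uR t) :
    IsLeast (nls2Costs T d f p h u fR pR hR uR) (Cstar + justInTimeCost T d fR pR) := by
  refine ⟨add_justInTimeCost_mem_nls2Costs hCstar.1 huR, ?_⟩
  rintro _ ⟨σR, σS, hσ, huS, -, rfl⟩
  by_cases hjit : IsJustInTime T d σR
  · have hmem : nlsCost T d f p h σS ∈ nlsCosts T d f p h u :=
      ⟨σS, fun t ht hd => ⟨(hσ t ht hd).1, (hσ t ht hd).2.1.trans (hσ t ht hd).2.2⟩,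
        fun t ht => hjit.nls2SS_eq_nlsS t ▸ huS t ht, rfl⟩
    rw [hjit.nls2Cost_eq]
    exact add_le_add_left (hCstar.2 hmem) _
  · have hhR_nonneg : ∀ t ∈ Finset.Icc 1 T, 0 ≤ hR t := fun t ht =>
      (add_nonneg (nonneg_of_mem_nlsCosts hf hp hh hCstar.1)
        (justInTimeCost_nonneg hfR hpR)).trans (hhR t ht)
    obtain ⟨t, ht, hs⟩ := exists_nlsS_pos_of_not_isJustInTime
      (fun t ht hd => ⟨(hσ t ht hd).1.trans (hσ t ht hd).2.1, (hσ t ht hd).2.2⟩) hjit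
    rw [nls2Cost_eq_supplier_add_retailer]
    calc Cstar + justInTimeCost T d fR pR ≤ hR t := hhR t ht
      _ ≤ nlsCost T d fR pR hR σR := le_nlsCost_of_nlsS_pos hfR hpR hhR_nonneg ht hs
      _ ≤ nls2SupplierCost T d f p h σR σS + nlsCost T d fR pR hR σR :=
          le_add_of_nonneg_left (nls2SupplierCost_nonneg hf hp hh)

/-- Reduction 2ULS-IB_SR-NLS ⟵ ULS-IB-NLS: given a single-level NLS instance
`(d, f, p, h, u)` with integer demands, feasible, with minimum cost `C*`, `M > C*`,
and arbitrary nonnegative retailer inventory bounds `uR`, the two-level NLS instance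
with supplier data `(f, p, h, u)`, retailer costs `f^R = p^R = 0`, `h^R = M` and
retailer bounds `uR` has minimum cost `C*`. -/
theorem stmt13 (T : ℕ) (hT : 1 ≤ T) (d : ℕ → ℕ) (f p h u : ℕ → ℝ)
    (hf : ∀ t ∈ Finset.Icc 1 T, 0 ≤ f t) (hp : ∀ t ∈ Finset.Icc 1 T, 0 ≤ p t)
    (hh : ∀ t ∈ Finset.Icc 1 T, 0 ≤ h t) (hu : ∀ t ∈ Finset.Icc 1 T, 0 ≤ u t)
    (Cstar M : ℝ)
    (hCstar : IsLeast {c : ℝ | ∃ σ : ℕ → ℕ,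
        (∀ t ∈ Finset.Icc 1 T, 0 < d t → 1 ≤ σ t ∧ σ t ≤ t) ∧
        (∀ t ∈ Finset.Icc 1 T, (nlsS T d σ t : ℝ) ≤ u t) ∧
        c = nlsCost T d f p h σ} Cstar)
    (hM : Cstar < M) (uR : ℕ → ℝ) (huR : ∀ t ∈ Finset.Icc 1 T, 0 ≤ uR t) :
    IsLeast {c : ℝ | ∃ σR σS : ℕ → ℕ,
      (∀ t ∈ Finset.Icc 1 T, 0 < d t → 1 ≤ σS t ∧ σS t ≤ σR t ∧ σR t ≤ t) ∧
      (∀ t ∈ Finset.Icc 1 T, (nls2SS T d σR σS t : ℝ) ≤ u t) ∧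
      (∀ t ∈ Finset.Icc 1 T, (nlsS T d σR t : ℝ) ≤ uR t) ∧
      c = nls2Cost T d f p h (fun _ => 0) (fun _ => 0) (fun _ => M) σR σS} Cstar := by
  have hC : Cstar + justInTimeCost T d (fun _ => 0) (fun _ => 0) = Cstar := by
    rw [justInTimeCost_zero, add_zero]
  exact hC ▸ stmt13_general hf hp hh (fun _ _ => le_rfl) (fun _ _ => le_rfl) hCstar
    (fun _ _ => hC.trans_le hM.le) huR
end

section
/- Consider a two-level instance with nonnegative integer demands d_t, nonnegative integer inventory bounds u^R_t and u^S_t at the retailer and supplier levels, and nonnegative real costs f^S_t, p^S_t, h^S_t, f^R_t, p^R_t, h^R_t (t = 1,…,T). For a level i ∈ {R,S} and integer X ≥ 0 set C^i_t(X) = f^i_t + p^i_t·X if X > 0 and C^i_t(0) = 0. Define H_{T+1}(a,b) = 0 for all integers a, b ≥ 0, and for t = T down to 1 and integers 0 ≤ a ≤ u^R_{t-1}, 0 ≤ b ≤ u^S_{t-1} (with u^R_0 = u^S_0 = 0) define H_t(a,b) as the minimum, over integers s̄ with max(0, a − d_t) ≤ s̄ ≤ min(u^R_t, d_{tT}) and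 integers s with max(0, b − X^R) ≤ s ≤ min(u^S_t, d_{tT}) such that s̄ + s ≤ d_{tT}, where X^R = s̄ + d_t − a and X^S = s + X^R − b, of C^R_t(X^R) + C^S_t(X^S) + h^R_t·s̄ + h^S_t·s + H_{t+1}(s̄, s) (the minimum of an empty set being +∞), where d_{tT} = Σ_{i=t}^{T} d_i. Then H_1(0,0) equals the minimum total cost over all integer-valued feasible two-level plans of the instance (and equals +∞ if no such plan exists). -/
open scoped ENNReal

/-- Cumulative demand `d_{tT} = Σ_{i=t}^{T} d i`. -/
def dtT (T : ℕ) (d : ℕ → ℕ) (t : ℕ) : ℕ := ∑ i ∈ Finset.Icc t T, d i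

/-- Ordering cost `C_t(X) = f + p·X` if `X > 0`, and `0` if `X = 0`. -/
noncomputable def ordCost (f p : ℝ) (X : ℕ) : ℝ := if 0 < X then f + p * X else 0

/-- The dynamic program of the 2ULS-IB_SR problem: `dpH … n a b` is the value
`H_t(a, b)` for `t = T + 1 − n`, i.e. the optimal cost of satisfying the demands of
periods `t,…,T` starting with retailer inventory `a` and supplier inventory `b`.
`H_{T+1}(a,b) = 0` and `H_t(a,b)` is the minimum over integers
`max(0, a − d t) ≤ s̄ ≤ min(uR t, d_{tT})` and `max(0, b − X^R) ≤ s ≤ min(uS t, d_{tT})`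
with `s̄ + s ≤ d_{tT}`, where `X^R = s̄ + d t − a` and `X^S = s + X^R − b`, of
`C^R_t(X^R) + C^S_t(X^S) + h^R_t·s̄ + h^S_t·s + H_{t+1}(s̄, s)` (minimum of the empty
set being `+∞`). -/
noncomputable def dpH (T : ℕ) (d uR uS : ℕ → ℕ) (fR pR hR fS pS hS : ℕ → ℝ) :
    ℕ → ℕ → ℕ → ℝ≥0∞
  | 0, _, _ => 0
  | n + 1, a, b =>
    letI t := T - n
    (((Finset.range (min (uR t) (dtT T d t) + 1)) ×ˢ
        (Finset.range (min (uS t) (dtT T d t) + 1))).filter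
      (fun q => a ≤ q.1 + d t ∧ b ≤ q.1 + d t - a + q.2 ∧ q.1 + q.2 ≤ dtT T d t)).inf
      (fun q =>
        ENNReal.ofReal
          (ordCost (fR t) (pR t) (q.1 + d t - a) +
           ordCost (fS t) (pS t) (q.2 + (q.1 + d t - a) - b) +
           hR t * q.1 + hS t * q.2) +
        dpH T d uR uS fR pR hR fS pS hS n q.1 q.2)

/-!
The states of the dynamic program are the pairs (retailer inventory, supplier inventory), and the
balance equations recover the orders from consecutive states. By Bellman's principle the recursion
minimises the cost over all state trajectories it admits. Every such trajectory is a feasible plan,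
but a feasible plan may carry more stock than the remaining demand, which the recursion forbids.
Capping both the retailer inventory `s^R` and the echelon inventory `s^R + s^S` at the remaining
demand turns any feasible plan into an admitted trajectory; no order and no inventory increases, so
neither does the cost as long as each period's cost is monotone.
-/

section BellmanPrinciple

variable {σ M : Type*} [LinearOrderedAddCommMonoidWithTop M] {T t : ℕ}
  {next : ℕ → σ → Finset σ} {cost : ℕ → σ → σ → M} {V : ℕ → σ → M} {z : ℕ → σ}

/-- `V` solves the backward Bellman recursion with horizon `T`: `V t s` is the cost-to-go from the
state `s` reached at the end of period `t`. In period `t` the state `s` may move to any element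
of `next t s`, and moving to `q` costs `cost t s q`. -/
structure IsCostToGo (T : ℕ) (next : ℕ → σ → Finset σ) (cost : ℕ → σ → σ → M)
    (V : ℕ → σ → M) : Prop where
  terminal : ∀ s, V T s = 0
  step : ∀ t < T, ∀ s,
    V t s = (next (t + 1) s).inf fun q ↦ cost (t + 1) s q + V (t + 1) q

/-- The state sequence `z` follows the transitions `next` in the periods `t + 1, …, T`; `z i` is
the state at the end of period `i`. -/
def IsTrajectory (next : ℕ → σ → Finset σ) (t T : ℕ) (z : ℕ → σ) : Prop :=
  ∀ i ∈ Finset.Ioc t T, z i ∈ next i (z (i - 1))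

/-- The cost of the state sequence `z` over the periods `t + 1, …, T`. -/
def trajectoryCost (cost : ℕ → σ → σ → M) (t T : ℕ) (z : ℕ → σ) : M :=
  ∑ i ∈ Finset.Ioc t T, cost i (z (i - 1)) (z i)

theorem trajectoryCost_eq_add (ht : t < T) :
    trajectoryCost cost t T z =
      cost (t + 1) (z t) (z (t + 1)) + trajectoryCost cost (t + 1) T z := by
  simp only [trajectoryCost]
  rw [← Finset.sum_Ioc_consecutive _ t.le_succ ht, Nat.Ioc_succ_singleton, Finset.sum_singleton,
    Nat.add_sub_cancel]

theorem IsTrajectory.tail (hz : IsTrajectory next t T z) : IsTrajectory next (t + 1) T z :=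
  fun i hi ↦ hz i (Finset.Ioc_subset_Ioc_left t.le_succ hi)

theorem IsTrajectory.update (hz : IsTrajectory next (t + 1) T z) {s : σ}
    (hs : z (t + 1) ∈ next (t + 1) s) : IsTrajectory next t T (Function.update z t s) := by
  intro i hi
  obtain ⟨hti, hiT⟩ := Finset.mem_Ioc.mp hi
  rw [Function.update_of_ne hti.ne']
  obtain rfl | hlt := (Nat.succ_le_of_lt hti).eq_or_lt
  · simpa using hs
  · rw [Function.update_of_ne (by omega)]
    exact hz i (Finset.mem_Ioc.mpr ⟨hlt, hiT⟩)

theorem trajectoryCost_update (s : σ) :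
    trajectoryCost cost (t + 1) T (Function.update z t s) = trajectoryCost cost (t + 1) T z := by
  refine Finset.sum_congr rfl fun i hi ↦ ?_
  have hti := (Finset.mem_Ioc.mp hi).1
  rw [Function.update_of_ne (by omega), Function.update_of_ne (by omega)]

theorem IsCostToGo.le_trajectoryCost (hV : IsCostToGo T next cost V) (ht : t ≤ T)
    (hz : IsTrajectory next t T z) : V t (z t) ≤ trajectoryCost cost t T z := by
  induction ht using Nat.decreasingInduction with
  | self => simp [hV.terminal, trajectoryCost]
  | of_succ t ht ih =>
    have hnext : z (t + 1) ∈ next (t + 1) (z t) :=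
      hz (t + 1) (Finset.mem_Ioc.mpr ⟨t.lt_succ_self, ht⟩)
    calc V t (z t)
        ≤ cost (t + 1) (z t) (z (t + 1)) + V (t + 1) (z (t + 1)) := by
          rw [hV.step t ht]
          exact Finset.inf_le hnext
      _ ≤ cost (t + 1) (z t) (z (t + 1)) + trajectoryCost cost (t + 1) T z := by
          gcongr
          exact ih hz.tail
      _ = trajectoryCost cost t T z := (trajectoryCost_eq_add ht).symm

theorem IsCostToGo.exists_trajectoryCost_eq (hV : IsCostToGo T next cost V) (ht : t ≤ T) {s : σ}
    (hs : V t s ≠ ⊤) :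
    ∃ z, z t = s ∧ IsTrajectory next t T z ∧ trajectoryCost cost t T z = V t s := by
  induction ht using Nat.decreasingInduction generalizing s with
  | self => exact ⟨fun _ ↦ s, rfl, by simp [IsTrajectory], by simp [hV.terminal, trajectoryCost]⟩
  | of_succ t ht ih =>
    rw [hV.step t ht] at hs ⊢
    have hne : (next (t + 1) s).Nonempty :=
      Finset.nonempty_iff_ne_empty.mpr fun h ↦ hs (by rw [h, Finset.inf_empty])
    obtain ⟨q, hq, hmin⟩ := Finset.exists_mem_eq_inf _ hne
      fun q ↦ cost (t + 1) s q + V (t + 1) q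
    rw [hmin] at hs ⊢
    obtain ⟨z, rfl, hz, hcost⟩ := ih fun h ↦ hs (by rw [h, add_top])
    refine ⟨Function.update z t s, Function.update_self .., hz.update hq, ?_⟩
    rw [trajectoryCost_eq_add ht, trajectoryCost_update, hcost, Function.update_self,
      Function.update_of_ne t.succ_ne_self]

end BellmanPrinciple

section TwoLevelPlans

variable {T t : ℕ} {d uR uS : ℕ → ℕ} {p q : ℕ × ℕ}

/-- `(xR, sR, xS, sS)` is an integer-valued feasible two-level plan for the demands `d` and the
inventory bounds `uR`, `uS` over the horizon `T`. -/
def IsFeasiblePlan (T : ℕ) (d uR uS xR sR xS sS : ℕ → ℕ) : Prop :=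
  sR 0 = 0 ∧ sS 0 = 0 ∧
  (∀ t ∈ Finset.Icc 1 T, sR (t - 1) + xR t = d t + sR t) ∧
  (∀ t ∈ Finset.Icc 1 T, sS (t - 1) + xS t = xR t + sS t) ∧
  (∀ t ∈ Finset.Icc 1 T, sR t ≤ uR t) ∧
  (∀ t ∈ Finset.Icc 1 T, sS t ≤ uS t)

/-- The states (retailer inventory, supplier inventory) which the dynamic program allows at the end
of period `t` when the period starts in the state `p`. -/
def nextStates (T : ℕ) (d uR uS : ℕ → ℕ) (t : ℕ) (p : ℕ × ℕ) : Finset (ℕ × ℕ) :=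
  (Finset.range (min (uR t) (dtT T d t) + 1) ×ˢ
    Finset.range (min (uS t) (dtT T d t) + 1)).filter
      fun q ↦ p.1 ≤ q.1 + d t ∧ p.2 ≤ q.1 + d t - p.1 + q.2 ∧ q.1 + q.2 ≤ dtT T d t

theorem mem_nextStates :
    q ∈ nextStates T d uR uS t p ↔
      (q.1 ≤ uR t ∧ q.2 ≤ uS t) ∧
        p.1 ≤ q.1 + d t ∧ p.2 ≤ q.1 + d t - p.1 + q.2 ∧ q.1 + q.2 ≤ dtT T d t := by
  simp only [nextStates, Finset.mem_filter, Finset.mem_product, Finset.mem_range]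
  omega

/-- The decision `(X^R, X^S, s^R, s^S)` of a period with demand `d` which leads from the state `p`
to the state `q`. The subtractions are truncated; they are exact when `q` is one of the
`nextStates` of `p`. -/
def periodDecision (d : ℕ) (p q : ℕ × ℕ) : ℕ × ℕ × ℕ × ℕ :=
  (q.1 + d - p.1, q.2 + (q.1 + d - p.1) - p.2, q.1, q.2)

/-- The state obtained from `q` by capping the retailer inventory and the echelon inventory
(retailer plus supplier) at `D`. -/
def capEchelon (D : ℕ) (q : ℕ × ℕ) : ℕ × ℕ :=
  (min q.1 D, min (q.1 + q.2) D - min q.1 D)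

theorem dtT_eq_add (ht : t ≤ T) : dtT T d t = d t + dtT T d (t + 1) := by
  simp only [dtT, Finset.Icc_add_one_left_eq_Ioc, Finset.add_sum_Ioc_eq_sum_Icc ht]

theorem capEchelon_mem_nextStates {xR xS : ℕ} (ht : t ≤ T)
    (hR : p.1 + xR = d t + q.1) (hS : p.2 + xS = xR + q.2) (hqR : q.1 ≤ uR t) (hqS : q.2 ≤ uS t) :
    capEchelon (dtT T d (t + 1)) q ∈ nextStates T d uR uS t (capEchelon (dtT T d t) p) := by
  simp only [mem_nextStates, capEchelon, dtT_eq_add ht]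
  omega

theorem periodDecision_capEchelon_le {d D xR xS : ℕ}
    (hR : p.1 + xR = d + q.1) (hS : p.2 + xS = xR + q.2) :
    periodDecision d (capEchelon (d + D) p) (capEchelon D q) ≤ (xR, xS, q.1, q.2) := by
  simp only [periodDecision, capEchelon, Prod.mk_le_mk]
  omega

theorem IsTrajectory.isFeasiblePlan {z : ℕ → ℕ × ℕ} (h0 : z 0 = (0, 0))
    (hz : IsTrajectory (nextStates T d uR uS) 0 T z) :
    IsFeasiblePlan T d uR uS
      (fun t ↦ (periodDecision (d t) (z (t - 1)) (z t)).1) (fun t ↦ (z t).1)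
      (fun t ↦ (periodDecision (d t) (z (t - 1)) (z t)).2.1) (fun t ↦ (z t).2) := by
  have hmem : ∀ t ∈ Finset.Icc 1 T, _ := fun t ht ↦ mem_nextStates.mp (hz t ht)
  refine ⟨by simp only [h0], by simp only [h0], fun t ht ↦ ?_, fun t ht ↦ ?_,
    fun t ht ↦ (hmem t ht).1.1, fun t ht ↦ (hmem t ht).1.2⟩ <;>
  · have := hmem t ht
    simp only [periodDecision]
    omega

variable {xR sR xS sS : ℕ → ℕ}

theorem IsFeasiblePlan.isTrajectory_capEchelon (h : IsFeasiblePlan T d uR uS xR sR xS sS) :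
    IsTrajectory (nextStates T d uR uS) 0 T
      fun t ↦ capEchelon (dtT T d (t + 1)) (sR t, sS t) := by
  obtain ⟨-, -, hR, hS, huR, huS⟩ := h
  intro t ht
  obtain ⟨h0t, htT⟩ := Finset.mem_Ioc.mp ht
  simp only [Nat.sub_add_cancel h0t]
  exact capEchelon_mem_nextStates htT (hR t ht) (hS t ht) (huR t ht) (huS t ht)

variable {M : Type*} [LinearOrderedAddCommMonoidWithTop M] {c : ℕ → ℕ × ℕ × ℕ × ℕ → M}

theorem IsFeasiblePlan.trajectoryCost_capEchelon_le (hc : ∀ t ∈ Finset.Icc 1 T, Monotone (c t))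
    (h : IsFeasiblePlan T d uR uS xR sR xS sS) :
    trajectoryCost (fun t p q ↦ c t (periodDecision (d t) p q)) 0 T
        (fun t ↦ capEchelon (dtT T d (t + 1)) (sR t, sS t)) ≤
      ∑ t ∈ Finset.Icc 1 T, c t (xR t, xS t, sR t, sS t) := by
  obtain ⟨-, -, hR, hS, -, -⟩ := h
  refine Finset.sum_le_sum fun t ht ↦ hc t ht ?_
  obtain ⟨h0t, htT⟩ := Finset.mem_Ioc.mp ht
  simp only [Nat.sub_add_cancel h0t, dtT_eq_add htT]
  exact periodDecision_capEchelon_le (hR t ht) (hS t ht)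

/-- Inserting `⊤` makes the minimum over an empty set of plans equal to `⊤`. -/
theorem stmt14_general (hc : ∀ t ∈ Finset.Icc 1 T, Monotone (c t)) {V : ℕ → ℕ × ℕ → M}
    (hV : IsCostToGo T (nextStates T d uR uS) (fun t p q ↦ c t (periodDecision (d t) p q)) V) :
    IsLeast (insert ⊤ {v | ∃ xR sR xS sS, IsFeasiblePlan T d uR uS xR sR xS sS ∧
      v = ∑ t ∈ Finset.Icc 1 T, c t (xR t, xS t, sR t, sS t)}) (V 0 (0, 0)) := by
  constructor
  · refine or_iff_not_imp_left.mpr fun hne ↦ ?_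
    obtain ⟨z, h0, hz, hcost⟩ := hV.exists_trajectoryCost_eq T.zero_le hne
    exact ⟨_, _, _, _, hz.isFeasiblePlan h0, hcost.symm⟩
  · rintro _ (rfl | ⟨xR, sR, xS, sS, h, rfl⟩)
    · exact le_top
    · have hle := (hV.le_trajectoryCost T.zero_le h.isTrajectory_capEchelon).trans
        (h.trajectoryCost_capEchelon_le hc)
      simpa [capEchelon, h.1, h.2.1] using hle

end TwoLevelPlans

section FixedChargeCosts

/-- The cost of a period as a function of its decision `(X^R, X^S, s^R, s^S)`. -/
noncomputable def periodCost (fR pR hR fS pS hS : ℝ) (x : ℕ × ℕ × ℕ × ℕ) : ℝ :=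
  ordCost fR pR x.1 + ordCost fS pS x.2.1 + hR * x.2.2.1 + hS * x.2.2.2

theorem ordCost_eq_ite_add (f p : ℝ) (X : ℕ) :
    ordCost f p X = (if 0 < X then f else 0) + p * X := by
  obtain rfl | hX := X.eq_zero_or_pos
  · simp [ordCost]
  · simp [ordCost, hX]

theorem monotone_ordCost {f p : ℝ} (hf : 0 ≤ f) (hp : 0 ≤ p) : Monotone (ordCost f p) := by
  intro X Y hXY
  simp only [ordCost_eq_ite_add]
  gcongr
  split_ifs
  · exact le_rfl
  · omega
  · exact hf
  · exact le_rfl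

variable {fR pR hR fS pS hS : ℝ}

theorem monotone_periodCost (hfR : 0 ≤ fR) (hpR : 0 ≤ pR) (hhR : 0 ≤ hR)
    (hfS : 0 ≤ fS) (hpS : 0 ≤ pS) (hhS : 0 ≤ hS) : Monotone (periodCost fR pR hR fS pS hS) := by
  rintro x y ⟨hxR, hxS, hsR, hsS⟩
  have hordR := monotone_ordCost hfR hpR hxR
  have hordS := monotone_ordCost hfS hpS hxS
  unfold periodCost
  gcongr

theorem periodCost_nonneg (hmono : Monotone (periodCost fR pR hR fS pS hS))
    (x : ℕ × ℕ × ℕ × ℕ) : 0 ≤ periodCost fR pR hR fS pS hS x := by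
  simpa [periodCost, ordCost] using hmono (zero_le : 0 ≤ x)

theorem isCostToGo_dpH (T : ℕ) (d uR uS : ℕ → ℕ) (fR pR hR fS pS hS : ℕ → ℝ) :
    IsCostToGo T (nextStates T d uR uS)
      (fun t p q ↦ ENNReal.ofReal
        (periodCost (fR t) (pR t) (hR t) (fS t) (pS t) (hS t) (periodDecision (d t) p q)))
      (fun t p ↦ dpH T d uR uS fR pR hR fS pS hS (T - t) p.1 p.2) where
  terminal p := by simp [dpH]
  step t ht p := by
    obtain ⟨n, rfl⟩ := Nat.exists_eq_add_of_lt ht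
    rw [show t + n + 1 - t = n + 1 by omega, show t + n + 1 - (t + 1) = n by omega, dpH,
      show t + n + 1 - n = t + 1 by omega]
    rfl

theorem ofReal_sum_periodCost {T : ℕ} {fR pR hR fS pS hS : ℕ → ℝ}
    (hmono : ∀ t ∈ Finset.Icc 1 T,
      Monotone (periodCost (fR t) (pR t) (hR t) (fS t) (pS t) (hS t))) (xR sR xS sS : ℕ → ℕ) :
    ENNReal.ofReal (∑ t ∈ Finset.Icc 1 T,
      ((if 0 < xS t then fS t else 0) + pS t * (xS t : ℝ) + hS t * (sS t : ℝ) +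
       (if 0 < xR t then fR t else 0) + pR t * (xR t : ℝ) + hR t * (sR t : ℝ))) =
      ∑ t ∈ Finset.Icc 1 T, ENNReal.ofReal
        (periodCost (fR t) (pR t) (hR t) (fS t) (pS t) (hS t) (xR t, xS t, sR t, sS t)) := by
  rw [← ENNReal.ofReal_sum_of_nonneg fun t ht ↦ periodCost_nonneg (hmono t ht) _]
  congr 1
  refine Finset.sum_congr rfl fun t _ ↦ ?_
  simp only [periodCost, ordCost_eq_ite_add]
  ring

end FixedChargeCosts

/-- Correctness of the pseudo-polynomial dynamic program for 2ULS-IB_SR: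
`H_1(0,0)` (i.e. `dpH … T 0 0`) equals the minimum total cost over all integer-valued
feasible two-level plans (and `+∞` if none exists). -/
theorem stmt14 (T : ℕ) (hT : 1 ≤ T) (d uR uS : ℕ → ℕ)
    (fR pR hR fS pS hS : ℕ → ℝ)
    (hfR : ∀ t ∈ Finset.Icc 1 T, 0 ≤ fR t) (hpR : ∀ t ∈ Finset.Icc 1 T, 0 ≤ pR t)
    (hhR : ∀ t ∈ Finset.Icc 1 T, 0 ≤ hR t) (hfS : ∀ t ∈ Finset.Icc 1 T, 0 ≤ fS t)
    (hpS : ∀ t ∈ Finset.Icc 1 T, 0 ≤ pS t) (hhS : ∀ t ∈ Finset.Icc 1 T, 0 ≤ hS t) :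
    dpH T d uR uS fR pR hR fS pS hS T 0 0 =
      sInf {c : ℝ≥0∞ | ∃ xR sR xS sS : ℕ → ℕ,
        sR 0 = 0 ∧ sS 0 = 0 ∧
        (∀ t ∈ Finset.Icc 1 T, sR (t - 1) + xR t = d t + sR t) ∧
        (∀ t ∈ Finset.Icc 1 T, sS (t - 1) + xS t = xR t + sS t) ∧
        (∀ t ∈ Finset.Icc 1 T, sR t ≤ uR t) ∧
        (∀ t ∈ Finset.Icc 1 T, sS t ≤ uS t) ∧
        c = ENNReal.ofReal (∑ t ∈ Finset.Icc 1 T,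
          ((if 0 < xS t then fS t else 0) + pS t * (xS t : ℝ) + hS t * (sS t : ℝ) +
           (if 0 < xR t then fR t else 0) + pR t * (xR t : ℝ) + hR t * (sR t : ℝ)))} := by
  have hmono := fun t ht ↦ monotone_periodCost (hfR t ht) (hpR t ht) (hhR t ht) (hfS t ht)
    (hpS t ht) (hhS t ht)
  have hmin := stmt14_general (fun t ht ↦ ENNReal.ofReal_mono.comp (hmono t ht))
    (isCostToGo_dpH T d uR uS fR pR hR fS pS hS)
  simpa only [ofReal_sum_periodCost hmono, IsFeasiblePlan, and_assoc, Function.comp_apply,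
    sInf_insert, top_inf_eq, Nat.sub_zero] using hmin.csInf_eq.symm
end
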